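/- arXiv:2108.13849 — 5 statements merged into one kernel-verified Lean document; each statement's English description precedes it below -/
import Mathlib

section
/- Every finite-dimensional simple D-module is isomorphic to a quotient of the Verma module M_{1,c} for some c ∈ k. -/
open FreeAlgebra

/-- Generators of the double of the Jordan plane. -/
inductive JGen : Type
  | u | v | zeta | g | ginv | x | y

variable (k : Type) [Field k] [IsAlgClosed k] [CharZero k]

/-- The defining relations of the double of the Jordan plane. -/
inductive JRel : FreeAlgebra k JGen → FreeAlgebra k JGen → Prop
  | gginv : JRel (ι k .g * ι k .ginv) 1
  | ginvg : JRel (ι k .ginv * ι k .g) 1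
  | zg : JRel (ι k .zeta * ι k .g) (ι k .g * ι k .zeta)
  | gx : JRel (ι k .g * ι k .x) (ι k .x * ι k .g)
  | gy : JRel (ι k .g * ι k .y) (ι k .y * ι k .g + ι k .x * ι k .g)
  | zy : JRel (ι k .zeta * ι k .y) (ι k .y * ι k .zeta + ι k .y)
  | zx : JRel (ι k .zeta * ι k .x) (ι k .x * ι k .zeta + ι k .x)
  | ug : JRel (ι k .u * ι k .g) (ι k .g * ι k .u)
  | vg : JRel (ι k .v * ι k .g) (ι k .g * ι k .v + ι k .g * ι k .u)
  | vz : JRel (ι k .v * ι k .zeta) (ι k .zeta * ι k .v + ι k .v)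
  | uz : JRel (ι k .u * ι k .zeta) (ι k .zeta * ι k .u + ι k .u)
  | yx : JRel (ι k .y * ι k .x) (ι k .x * ι k .y - (1/2 : k) • (ι k .x * ι k .x))
  | vu : JRel (ι k .v * ι k .u) (ι k .u * ι k .v - (1/2 : k) • (ι k .u * ι k .u))
  | ux : JRel (ι k .u * ι k .x) (ι k .x * ι k .u)
  | vx : JRel (ι k .v * ι k .x) (ι k .x * ι k .v + (1 - ι k .g) + ι k .x * ι k .u)
  | uy : JRel (ι k .u * ι k .y) (ι k .y * ι k .u + (1 - ι k .g))
  | vy : JRel (ι k .v * ι k .y) (ι k .y * ι k .v - ι k .g * ι k .zeta + ι k .y * ι k .u)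

/-- The double of the Jordan plane, as the presented algebra. -/
def D : Type := RingQuot (JRel k)

noncomputable instance : Ring (D k) := inferInstanceAs (Ring (RingQuot (JRel k)))
noncomputable instance : Algebra k (D k) := inferInstanceAs (Algebra k (RingQuot (JRel k)))

/-- The canonical projection from the free algebra onto `D`. -/
noncomputable def Dmk : FreeAlgebra k JGen →ₐ[k] D k := RingQuot.mkAlgHom k (JRel k)

noncomputable def DU : D k := Dmk k (ι k .u)
noncomputable def DV : D k := Dmk k (ι k .v)
noncomputable def DZ : D k := Dmk k (ι k .zeta)
noncomputable def DG : D k := Dmk k (ι k .g)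
noncomputable def DGinv : D k := Dmk k (ι k .ginv)
noncomputable def DX : D k := Dmk k (ι k .x)
noncomputable def DY : D k := Dmk k (ι k .y)

set_option synthInstance.maxHeartbeats 1000000
set_option maxHeartbeats 2000000

/-- The left ideal of `D` generated by `g - a`, `ζ + c/2`, `u`, `v`. -/
noncomputable def MIdeal (a c : k) : Submodule (D k) (D k) :=
  Submodule.span (D k)
    {DG k - algebraMap k (D k) a, DZ k + algebraMap k (D k) (c / 2), DU k, DV k}

/-- The Verma module `M_{a,c} = D ⊗_{D^{≥0}} T_{a,c}`, realized as the quotient of `D` by the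
left ideal generated by `g - a`, `ζ + c/2`, `u`, `v` (the annihilator in `D^{≥0}` of the
generator `z_{a,c}` of `T_{a,c}`, on which `g` acts by `a`, `ζ` by `-c/2`, and `u`, `v` by `0`).
The class of `1` corresponds to `1 ⊗ z_{a,c}`. -/
noncomputable abbrev Mver (a c : k) : Type := (D k) ⧸ (MIdeal k a c)

/-- The class of `d ∈ D` in `M_{a,c}`. -/
noncomputable def mmk (a c : k) : D k → Mver k a c := Submodule.Quotient.mk

/-!
On a finite-dimensional `D`-module the commutator `[u, y] = 1 - g` commutes with `u`, so it acts
nilpotently by Jacobson's lemma: a commutator `[a, b]` commuting with an algebraic element `a` is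
nilpotent in characteristic zero. Choose an eigenvalue of `ζ` such that one less is not an
eigenvalue. Since `u` and `v` lower `ζ`-eigenvalues by one, they vanish on its eigenspace, on which
the nilpotent operator `1 - g` has a nonzero kernel vector `w`. Hence `1 ⊗ z ↦ w` defines a nonzero
map from some `M_{1,c}`, which is surjective when the module is simple.
-/

section Jacobson

open Polynomial

variable {R A : Type*} [CommRing R] [Ring A] [Algebra R A] {a b : A}

theorem lie_pow_left_of_commute_lie (h : Commute a ⁅a, b⁆) (n : ℕ) :
    ⁅a ^ n, b⁆ = n * a ^ (n - 1) * ⁅a, b⁆ := by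
  induction n with
  | zero => simp [Ring.lie_def]
  | succ n ih =>
    calc ⁅a ^ (n + 1), b⁆ = a ^ n * ⁅a, b⁆ + ⁅a ^ n, b⁆ * a := by
          simp only [Ring.lie_def, pow_succ]; noncomm_ring
      _ = a ^ n * ⁅a, b⁆ + n * (a ^ (n - 1) * a) * ⁅a, b⁆ := by
          rw [ih, mul_assoc _ ⁅a, b⁆, ← h.eq]; simp only [mul_assoc]
      _ = (n + 1 : ℕ) * a ^ (n + 1 - 1) * ⁅a, b⁆ := by
          rcases n with _ | n
          · simp
          · simp only [Nat.add_sub_cancel, ← pow_succ]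
            push_cast
            noncomm_ring

theorem lie_aeval_left_of_commute_lie (h : Commute a ⁅a, b⁆) (p : R[X]) :
    ⁅aeval a p, b⁆ = aeval a (derivative p) * ⁅a, b⁆ := by
  induction p using Polynomial.induction_on' with
  | add p q hp hq =>
    rw [map_add, Ring.lie_def, add_mul, mul_add, add_sub_add_comm, ← Ring.lie_def, ← Ring.lie_def,
      hp, hq, derivative_add, map_add, add_mul]
  | monomial n r =>
    rw [aeval_monomial, derivative_monomial, aeval_monomial, ← Algebra.smul_def, Ring.lie_def,
      smul_mul_assoc, mul_smul_comm, ← smul_sub, ← Ring.lie_def, lie_pow_left_of_commute_lie h,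
      map_mul, map_natCast, Algebra.smul_def]
    simp only [mul_assoc]

theorem aeval_derivative_mul_lie_pow_eq_zero (h : Commute a ⁅a, b⁆) {p : R[X]} {m : ℕ}
    (hp : aeval a p * ⁅a, b⁆ ^ m = 0) :
    aeval a (derivative p) * ⁅a, b⁆ ^ (2 * m + 1) = 0 := by
  set c := ⁅a, b⁆
  have hcomm (q : R[X]) : Commute (aeval a q) (c ^ m) := by
    rw [aeval_eq_sum_range]
    exact Commute.sum_left _ _ _ fun i _ => (h.pow_pow i m).smul_left _
  calc aeval a (derivative p) * c ^ (2 * m + 1)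
      = aeval a (derivative p) * c ^ m * c * c ^ m := by
        rw [mul_assoc _ _ c, ← pow_succ, mul_assoc, ← pow_add]; congr 2; ring
    _ = c ^ m * ⁅aeval a p, b⁆ * c ^ m := by
        rw [(hcomm _).eq, lie_aeval_left_of_commute_lie h, mul_assoc (c ^ m)]
    _ = c ^ m * aeval a p * b * c ^ m - c ^ m * b * (aeval a p * c ^ m) := by
        rw [Ring.lie_def]; noncomm_ring
    _ = 0 := by rw [← (hcomm p).eq, hp, zero_mul, zero_mul, mul_zero, sub_zero]

variable [IsDomain R] [CharZero R] [Module.IsTorsionFree R A]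

theorem isNilpotent_lie_of_aeval_mul_pow_eq_zero (h : Commute a ⁅a, b⁆) {p : R[X]} (hp₀ : p ≠ 0)
    {m : ℕ} (hp : aeval a p * ⁅a, b⁆ ^ m = 0) : IsNilpotent ⁅a, b⁆ := by
  induction hn : p.natDegree using Nat.strong_induction_on generalizing p m with
  | _ n ih =>
    subst hn
    by_cases hdeg : p.natDegree = 0
    · obtain ⟨r, rfl⟩ := natDegree_eq_zero.1 hdeg
      rw [aeval_C, ← Algebra.smul_def] at hp
      exact ⟨m, (smul_eq_zero.1 hp).resolve_left (C_ne_zero.1 hp₀)⟩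
    · exact ih _ (natDegree_derivative_lt hdeg) (mt derivative_eq_zero.1 hdeg)
        (aeval_derivative_mul_lie_pow_eq_zero h hp) rfl

theorem isNilpotent_lie_of_isAlgebraic_of_commute (ha : IsAlgebraic R a) (h : Commute a ⁅a, b⁆) :
    IsNilpotent ⁅a, b⁆ := by
  obtain ⟨p, hp₀, hp⟩ := ha
  exact isNilpotent_lie_of_aeval_mul_pow_eq_zero h hp₀ (m := 0) (by rw [hp, zero_mul])

end Jacobson

section Eigenspace

open Module End

theorem exists_pow_apply_ne_zero_apply_eq_zero_of_isNilpotent {R M : Type*} [Semiring R]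
    [AddCommMonoid M] [Module R M] {g : End R M} (hg : IsNilpotent g) {w : M} (hw : w ≠ 0) :
    ∃ n : ℕ, (g ^ n) w ≠ 0 ∧ g ((g ^ n) w) = 0 := by
  obtain ⟨m, hm⟩ := hg
  by_contra! hstep
  have hne (n : ℕ) : (g ^ n) w ≠ 0 := by
    induction n with
    | zero => simpa using hw
    | succ n ih => simpa only [pow_succ', End.mul_apply] using hstep n ih
  exact hne m (by rw [hm, LinearMap.zero_apply])

variable {R M : Type*} [CommRing R] [AddCommGroup M] [Module R M] {f g : End R M} {μ t : R}

theorem apply_mem_eigenspace_add_of_lie_eq_smul (h : ⁅f, g⁆ = t • g) {w : M}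
    (hw : w ∈ f.eigenspace μ) : g w ∈ f.eigenspace (μ + t) := by
  rw [mem_eigenspace_iff] at hw ⊢
  have hfg : f (g w) - g (f w) = t • g w := LinearMap.congr_fun h w
  rw [hw, map_smul, sub_eq_iff_eq_add'] at hfg
  rw [hfg, add_smul]

theorem apply_eq_zero_of_lie_eq_smul (h : ⁅f, g⁆ = t • g) (hμ : ¬ f.HasEigenvalue (μ + t)) {w : M}
    (hw : w ∈ f.eigenspace μ) : g w = 0 := by
  by_contra hgw
  exact hμ (hasEigenvalue_of_hasEigenvector
    ⟨apply_mem_eigenspace_add_of_lie_eq_smul h hw, hgw⟩)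

theorem exists_hasEigenvalue_not_hasEigenvalue_add [IsDomain R] [CharZero R]
    [IsTorsionFree R M] [Module.Finite R M] (hμ : f.HasEigenvalue μ) (ht : t ≠ 0) :
    ∃ ν, f.HasEigenvalue ν ∧ ¬ f.HasEigenvalue (ν + t) := by
  by_contra! hadd
  have hmul (n : ℕ) : f.HasEigenvalue (μ + n * t) := by
    induction n with
    | zero => simpa using hμ
    | succ n ih => simpa [add_mul, add_assoc] using hadd _ ih
  have hinj : Function.Injective fun n : ℕ => μ + n * t := fun m n hmn => by
    simpa [ht] using hmn
  exact Set.infinite_of_injective_forall_mem hinj hmul (finite_hasEigenvalue f)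

theorem exists_mem_eigenspace_apply_eq_zero_of_isNilpotent (hg : IsNilpotent g)
    (hfg : Commute f g) (hμ : f.HasEigenvalue μ) :
    ∃ w ∈ f.eigenspace μ, w ≠ 0 ∧ g w = 0 := by
  obtain ⟨w, hw, hw₀⟩ := hμ.exists_hasEigenvector
  obtain ⟨n, hgn, hgn'⟩ := exists_pow_apply_ne_zero_apply_eq_zero_of_isNilpotent hg hw₀
  exact ⟨(g ^ n) w, mapsTo_genEigenspace_of_comm (hfg.pow_right n) μ 1 hw, hgn, hgn'⟩

end Eigenspace

section Verma

open Module

variable {k : Type} [Field k]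

theorem Dmk_eq_of_JRel {p q : FreeAlgebra k JGen} (h : JRel k p q) : Dmk k p = Dmk k q :=
  RingQuot.mkAlgHom_rel k h

theorem commute_DZ_DG : Commute (DZ k) (DG k) := by
  simpa [Commute, SemiconjBy, DZ, DG] using Dmk_eq_of_JRel (k := k) .zg

theorem commute_DU_DG : Commute (DU k) (DG k) := by
  simpa [Commute, SemiconjBy, DU, DG] using Dmk_eq_of_JRel (k := k) .ug

theorem lie_DU_DY : ⁅DU k, DY k⁆ = 1 - DG k := by
  rw [Ring.lie_def, sub_eq_iff_eq_add']
  simpa [DU, DY, DG] using Dmk_eq_of_JRel (k := k) .uy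

theorem lie_DZ_DU : ⁅DZ k, DU k⁆ = -DU k := by
  have h : DU k * DZ k = DZ k * DU k + DU k := by
    simpa [DZ, DU] using Dmk_eq_of_JRel (k := k) .uz
  rw [Ring.lie_def, h, sub_add_cancel_left]

theorem lie_DZ_DV : ⁅DZ k, DV k⁆ = -DV k := by
  have h : DV k * DZ k = DZ k * DV k + DV k := by
    simpa [DZ, DV] using Dmk_eq_of_JRel (k := k) .vz
  rw [Ring.lie_def, h, sub_add_cancel_left]

variable {S : Type*} [AddCommGroup S] [Module k S] [Module (D k) S]

/-- A vector on which `g`, `ζ`, `u`, `v` act as they do on the generator `z_{a,c}` of `T_{a,c}`.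
The zero vector is allowed. -/
structure IsVermaVector (a c : k) (w : S) : Prop where
  g_smul : DG k • w = a • w
  zeta_smul : DZ k • w = -(c / 2) • w
  u_smul : DU k • w = 0
  v_smul : DV k • w = 0

variable [IsScalarTower k (D k) S]

theorem IsVermaVector.MIdeal_le_ker {a c : k} {w : S} (hw : IsVermaVector a c w) :
    MIdeal k a c ≤ LinearMap.ker (LinearMap.toSpanSingleton (D k) S w) := by
  rw [MIdeal, Submodule.span_le]
  rintro d (rfl | rfl | rfl | rfl)
  · simp [sub_smul, hw.g_smul]
  · simp [add_smul, hw.zeta_smul]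
  · simp [hw.u_smul]
  · simp [hw.v_smul]

theorem IsVermaVector.exists_surjective_Mver [IsSimpleModule (D k) S] {a c : k} {w : S}
    (hw : IsVermaVector a c w) (hw₀ : w ≠ 0) :
    ∃ φ : Mver k a c →ₗ[D k] S, Function.Surjective φ := by
  refine ⟨(MIdeal k a c).liftQ _ hw.MIdeal_le_ker, ?_⟩
  rw [← LinearMap.range_eq_top, Submodule.range_liftQ, LinearMap.range_eq_top]
  exact IsSimpleModule.toSpanSingleton_surjective (D k) hw₀

variable [CharZero k] [FiniteDimensional k S]

variable (k S) in
theorem isNilpotent_lsmul_one_sub_DG : IsNilpotent (Algebra.lsmul k k S (1 - DG k)) := by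
  have hlie : ⁅Algebra.lsmul k k S (DU k), Algebra.lsmul k k S (DY k)⁆ =
      Algebra.lsmul k k S (1 - DG k) := by
    rw [← lie_DU_DY, Ring.lie_def, Ring.lie_def, map_sub, map_mul, map_mul]
  rw [← hlie]
  refine isNilpotent_lie_of_isAlgebraic_of_commute
    (Algebra.IsAlgebraic.isAlgebraic (R := k) _) ?_
  rw [hlie]
  exact ((Commute.one_right _).sub_right commute_DU_DG).map _

theorem exists_isVermaVector_one {μ : k} (hμ : (Algebra.lsmul k k S (DZ k)).HasEigenvalue μ) :
    ∃ (c : k) (w : S), w ≠ 0 ∧ IsVermaVector 1 c w := by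
  obtain ⟨ν, hν, hν'⟩ := exists_hasEigenvalue_not_hasEigenvalue_add hμ (neg_ne_zero.2 one_ne_zero)
  obtain ⟨w, hζ, hw₀, hg⟩ := exists_mem_eigenspace_apply_eq_zero_of_isNilpotent
    (isNilpotent_lsmul_one_sub_DG k S) (((Commute.one_right _).sub_right commute_DZ_DG).map _) hν
  have hlowered {d : D k} (hd : ⁅DZ k, d⁆ = -d) : d • w = 0 := by
    refine apply_eq_zero_of_lie_eq_smul (g := Algebra.lsmul k k S d) ?_ hν' hζ
    rw [Ring.lie_def, ← map_mul, ← map_mul, ← map_sub, ← Ring.lie_def, hd, map_neg, neg_one_smul]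
  refine ⟨-2 * ν, w, hw₀, ?_, ?_, hlowered lie_DZ_DU, hlowered lie_DZ_DV⟩
  · rw [one_smul]
    have : w - DG k • w = 0 := by simpa [sub_smul] using hg
    exact (sub_eq_zero.1 this).symm
  · have hν₂ : -(-2 * ν / 2) = ν := by ring
    rw [hν₂]
    exact End.mem_eigenspace_iff.1 hζ

theorem simple_is_quotient_of_Verma_general [IsSimpleModule (D k) S] {μ : k}
    (hμ : (Algebra.lsmul k k S (DZ k)).HasEigenvalue μ) :
    ∃ (c : k) (φ : Mver k 1 c →ₗ[D k] S), Function.Surjective φ := by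
  obtain ⟨c, w, hw₀, hw⟩ := exists_isVermaVector_one hμ
  exact ⟨c, hw.exists_surjective_Mver hw₀⟩

end Verma

/-- every finite-dimensional simple `D`-module is (isomorphic to) a quotient of
the Verma module `M_{1,c}` for some `c ∈ k`, i.e. admits a surjective `D`-linear map from
some `M_{1,c}`. -/
theorem simple_is_quotient_of_Verma (S : Type) (_ : AddCommGroup S) (_ : Module k S)
    (_ : Module (D k) S) (_ : IsScalarTower k (D k) S) (_ : FiniteDimensional k S)
    (hS : IsSimpleModule (D k) S) :
    ∃ (c : k) (φ : Mver k 1 c →ₗ[D k] S), Function.Surjective φ := by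
  have := IsSimpleModule.nontrivial (D k) S
  obtain ⟨_, hμ⟩ := Module.End.exists_eigenvalue (Algebra.lsmul k k S (DZ k))
  exact simple_is_quotient_of_Verma_general hμ
end

section
/- Let A be an associative unital algebra over an algebraically closed field k and let F ⊆ A be a family of elements such that: (a) the elements of F pairwise commute; (b) every element of F acts nilpotently on every finite-dimensional A-module; (c) the k-linear span I of F satisfies AI = IA. Then for every finite-dimensional simple A-module S, the two-sided ideal IA annihilates S; consequently the projection A → A/IA induces a bijection between the set of isomorphism classes of finite-dimensional simple A/IA-modules and the set of isomorphism classes of finite-dimensional simple A-modules. -/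
set_option synthInstance.maxHeartbeats 1000000
set_option maxHeartbeats 2000000

/-!
Commuting locally nilpotent operators on a nonzero Artinian module have a common kernel vector:
in a minimal nonzero submodule stable under all of them, the kernel of each operator is again
nonzero and stable, hence everything. So `F` kills some `v ≠ 0` in `S`, and then so does the left
ideal `AI`. As `IA ⊆ AI`, this ideal is two-sided, so it kills `A • v`, which is all of `S` by
simplicity.
-/

section CommonKernel

variable {k V : Type*} [Semiring k] [AddCommMonoid V] [Module k V]

theorem eq_bot_of_disjoint_ker_of_locally_nilpotent {f : Module.End k V} {W : Submodule k V}
    (hW : W ∈ f.invtSubmodule) (hnil : ∀ v ∈ W, ∃ n : ℕ, (f ^ n) v = 0)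
    (hdisj : Disjoint W (LinearMap.ker f)) : W = ⊥ := by
  have eq_zero_of_pow_apply (n : ℕ) : ∀ v ∈ W, (f ^ n) v = 0 → v = 0 := by
    induction n with
    | zero => exact fun v _ hv => hv
    | succ n ih =>
      intro v hv hfv
      have hfv_zero : f v = 0 := ih (f v) (hW hv) (by rwa [pow_succ] at hfv)
      exact Submodule.disjoint_def.mp hdisj v hv hfv_zero
  refine (Submodule.eq_bot_iff W).mpr fun v hv => ?_
  obtain ⟨n, hn⟩ := hnil v hv
  exact eq_zero_of_pow_apply n v hv hn

theorem ker_mem_invtSubmodule_of_commute {f g : Module.End k V} (h : Commute f g) :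
    LinearMap.ker f ∈ g.invtSubmodule := fun v (hv : f v = 0) =>
  calc f (g v) = g (f v) := LinearMap.congr_fun h.eq v
    _ = 0 := by rw [hv, map_zero]

theorem exists_ne_zero_forall_apply_eq_zero_of_commute [IsArtinian k V] [Nontrivial V]
    {T : Set (Module.End k V)} (hcomm : ∀ f ∈ T, ∀ g ∈ T, Commute f g)
    (hnil : ∀ f ∈ T, ∀ v, ∃ n : ℕ, (f ^ n) v = 0) :
    ∃ v : V, v ≠ 0 ∧ ∀ f ∈ T, f v = 0 := by
  obtain ⟨W, ⟨hW_ne, hW_inv⟩, hW_min⟩ :=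
    IsArtinian.set_has_minimal {W : Submodule k V | W ≠ ⊥ ∧ ∀ f ∈ T, W ∈ f.invtSubmodule}
      ⟨⊤, top_ne_bot, fun f _ => Module.End.invtSubmodule.top_mem f⟩
  have le_ker (f) (hf : f ∈ T) : W ≤ LinearMap.ker f := by
    have inf_ne_bot : W ⊓ LinearMap.ker f ≠ ⊥ := fun h => hW_ne <|
      eq_bot_of_disjoint_ker_of_locally_nilpotent (hW_inv f hf) (fun v _ => hnil f hf v)
        (disjoint_iff.mpr h)
    have inf_inv : ∀ g ∈ T, W ⊓ LinearMap.ker f ∈ g.invtSubmodule := fun g hg =>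
      Module.End.invtSubmodule.inf_mem (hW_inv g hg)
        (ker_mem_invtSubmodule_of_commute (hcomm f hf g hg))
    exact inf_eq_left.mp (inf_le_left.eq_of_not_lt (hW_min _ ⟨inf_ne_bot, inf_inv⟩))
  obtain ⟨v, hv, hv_ne⟩ := W.ne_bot_iff.mp hW_ne
  exact ⟨v, hv_ne, fun f hf => le_ker f hf hv⟩

end CommonKernel

section SimpleModule

variable {A S : Type*} [Ring A] [AddCommGroup S] [Module A S]

theorem le_annihilator_of_le_torsionOf [IsSimpleModule A S] {I : Ideal A} [I.IsTwoSided] {v : S}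
    (hv : v ≠ 0) (hI : I ≤ Ideal.torsionOf A S v) : I ≤ Module.annihilator A S := by
  refine fun i hi => Module.mem_annihilator.mpr fun s => ?_
  obtain ⟨b, rfl⟩ := IsSimpleModule.toSpanSingleton_surjective A hv s
  calc i • b • v = (i * b) • v := (mul_smul i b v).symm
    _ = 0 := hI (I.mul_mem_right b hi)

theorem span_le_annihilator_of_commute_of_locally_nilpotent (k : Type*) [Semiring k] [Module k S]
    [SMulCommClass A k S] [IsArtinian k S] [IsSimpleModule A S] {F : Set A}
    [(Ideal.span F).IsTwoSided] (hcomm : ∀ a ∈ F, ∀ b ∈ F, Commute a b)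
    (hnil : ∀ a ∈ F, ∀ s : S, ∃ n : ℕ, a ^ n • s = 0) :
    Ideal.span F ≤ Module.annihilator A S := by
  have : Nontrivial S := IsSimpleModule.nontrivial A S
  let action : A →+* Module.End k S := Module.toModuleEnd k S
  obtain ⟨v, hv_ne, hv⟩ : ∃ v : S, v ≠ 0 ∧ ∀ f ∈ action '' F, f v = 0 := by
    apply exists_ne_zero_forall_apply_eq_zero_of_commute
    · rintro _ ⟨a, ha, rfl⟩ _ ⟨b, hb, rfl⟩
      exact (hcomm a ha b hb).map action
    · rintro _ ⟨a, ha, rfl⟩ s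
      obtain ⟨n, hn⟩ := hnil a ha s
      exact ⟨n, by rwa [← map_pow]⟩
  exact le_annihilator_of_le_torsionOf hv_ne <|
    Ideal.span_le.mpr fun a ha => hv (action a) ⟨a, ha, rfl⟩

end SimpleModule

section LeftIdealSpan

variable {k A : Type*} [CommSemiring k] [Semiring A] [Algebra k A]

theorem isTwoSided_span_of_forall_mul_mem {F : Set A}
    (h : ∀ a ∈ F, ∀ b, a * b ∈ Ideal.span F) : (Ideal.span F).IsTwoSided where
  mul_mem_of_left {x} b hx := by
    induction hx using Submodule.span_induction with
    | mem a ha => exact h a ha b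
    | zero => rw [zero_mul]; exact zero_mem _
    | add x y _ _ hx hy => rw [add_mul]; exact add_mem hx hy
    | smul c x _ hx => rw [smul_mul_assoc]; exact Submodule.smul_mem _ c hx

theorem span_setOf_mul_eq_restrictScalars_span (F : Set A) :
    Submodule.span k {z : A | ∃ a : A, ∃ i ∈ Submodule.span k F, z = a * i} =
      (Ideal.span F).restrictScalars k := by
  have span_le : Submodule.span k F ≤ (Ideal.span F).restrictScalars k :=
    Submodule.span_le_restrictScalars k A F
  apply le_antisymm
  · rw [Submodule.span_le]
    rintro _ ⟨a, i, hi, rfl⟩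
    exact Ideal.mul_mem_left _ a (span_le hi)
  · intro z (hz : z ∈ Ideal.span F)
    induction hz using Submodule.closure_induction with
    | zero => exact zero_mem _
    | add x y _ _ hx hy => exact add_mem hx hy
    | smul_mem a i hi => exact Submodule.subset_span ⟨a, i, Submodule.subset_span hi, rfl⟩

end LeftIdealSpan

theorem span_annihilates_simple_general {k A S : Type*} [CommSemiring k] [Ring A] [Algebra k A]
    [AddCommGroup S] [Module k S] [Module A S] [IsScalarTower k A S] [IsArtinian k S]
    [IsSimpleModule A S] {F : Set A} (hcomm : ∀ a ∈ F, ∀ b ∈ F, a * b = b * a)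
    (hnil : ∀ a ∈ F, ∀ s : S, ∃ n : ℕ, a ^ n • s = 0)
    (hnormal :
      Submodule.span k {z : A | ∃ i ∈ Submodule.span k F, ∃ a : A, z = i * a} ≤
        Submodule.span k {z : A | ∃ a : A, ∃ i ∈ Submodule.span k F, z = a * i}) :
    ∀ z ∈ Submodule.span k {z : A | ∃ a : A, ∃ i ∈ Submodule.span k F, z = a * i},
      ∀ s : S, z • s = 0 := by
  rw [span_setOf_mul_eq_restrictScalars_span] at hnormal ⊢
  have : SMulCommClass A k S := IsScalarTower.to_smulCommClass'
  have : (Ideal.span F).IsTwoSided := isTwoSided_span_of_forall_mul_mem fun a ha b =>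
    hnormal (Submodule.subset_span ⟨a, Submodule.subset_span ha, b, rfl⟩)
  exact fun z hz => Module.mem_annihilator.mp
    (span_le_annihilator_of_commute_of_locally_nilpotent k hcomm hnil hz)

/-- let `A` be an algebra over an algebraically closed field `k` and `F ⊆ A` a
family of elements such that (a) the elements of `F` pairwise commute, (b) every element of
`F` acts nilpotently on every finite-dimensional `A`-module, and (c) the `k`-linear span `I`
of `F` satisfies `AI = IA`.  Then for every finite-dimensional simple `A`-module `S`, the
two-sided ideal `IA` annihilates `S`.  (Consequently the projection `A → A/IA` induces a
bijection between isomorphism classes of finite-dimensional simple `A/IA`-modules and of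
finite-dimensional simple `A`-modules: since `IA` acts by `0` on every finite-dimensional
simple `A`-module, these are tautologically the same as the finite-dimensional simple
modules over the quotient.) -/
theorem span_annihilates_simple (k : Type) [Field k] [IsAlgClosed k]
    (A : Type) [Ring A] [Algebra k A] (F : Set A)
    (hcomm : ∀ a ∈ F, ∀ b ∈ F, a * b = b * a)
    (hnil : ∀ (M : Type) (_ : AddCommGroup M) (_ : Module k M) (_ : Module A M)
      (_ : IsScalarTower k A M) (_ : FiniteDimensional k M),
        ∀ a ∈ F, ∃ n : ℕ, ∀ m : M, (a ^ n) • m = 0)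
    (hnormal :
      Submodule.span k {z : A | ∃ a : A, ∃ i ∈ Submodule.span k F, z = a * i} =
        Submodule.span k {z : A | ∃ i ∈ Submodule.span k F, ∃ a : A, z = i * a}) :
    ∀ (S : Type) (_ : AddCommGroup S) (_ : Module k S) (_ : Module A S)
      (_ : IsScalarTower k A S) (_ : FiniteDimensional k S), IsSimpleModule A S →
        ∀ z ∈ Submodule.span k {z : A | ∃ i ∈ Submodule.span k F, ∃ a : A, z = i * a},
          ∀ s : S, z • s = 0 := by
  intro S _ _ _ _ _ _ z hz
  exact span_annihilates_simple_general hcomm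
    (fun a ha s => (hnil S _ _ _ ‹_› ‹_› a ha).imp fun _ h => h s) hnormal.ge z (hnormal ▸ hz)
end

section
/- For every n ∈ ℕ, the formulas y·t_i = t_{i+1} (with t_{n+1} := 0), v·t_i = (i/2)(n−i+1) t_{i−1} (with t_{−1} := 0), ζ·t_i = −(1/2)(n−2i) t_i, x·t_i = 0, u·t_i = 0, g·t_i = t_i, on a k-vector space L_n with basis t_0, …, t_n, define a D-module structure on L_n, and L_n is a simple D-module of dimension n+1. -/
open FreeAlgebra

variable (k : Type) [Field k] [IsAlgClosed k] [CharZero k]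

set_option synthInstance.maxHeartbeats 1000000
set_option maxHeartbeats 2000000

/-- The standard basis vectors `t_0, …, t_n` of `L_n = k^{n+1}`. -/
noncomputable def tvec (n : ℕ) (i : Fin (n + 1)) : Fin (n + 1) → k := Pi.single i 1

/-!
Sending `x` and `u` to `0` and `g` to `1` collapses the relations of `D` to
`[ζ, y] = y`, `[v, ζ] = v` and `[v, y] = -ζ`, the relations of `sl₂` up to rescaling. The shift
`t_i ↦ t_{i+1}`, a weighted backward shift and a diagonal operator satisfy them as soon as the
diagonal entries increase by `1` and are the negatives of the differences of consecutive weights.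
The module is simple because the forward shift is nilpotent and its kernel is the line through
`t_n`, so a nonzero submodule contains `t_n`; the weights of the backward shift do not vanish, so
it then contains every `t_i`.
-/

section Modules

variable {R M : Type*}

theorem eq_bot_of_isNilpotent_of_disjoint_ker [Semiring R] [AddCommMonoid M] [Module R M]
    {f : Module.End R M} {W : Submodule R M} (hf : IsNilpotent f) (hW : W ∈ f.invtSubmodule)
    (hdisj : Disjoint W (LinearMap.ker f)) : W = ⊥ := by
  have eq_zero_of_pow_apply (m : ℕ) : ∀ w ∈ W, (f ^ m) w = 0 → w = 0 := by
    induction m with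
    | zero => simp
    | succ m ih =>
      intro w hw hpow
      rw [pow_succ, Module.End.mul_apply] at hpow
      exact Submodule.disjoint_def.mp hdisj w hw (ih (f w) (hW hw) hpow)
  obtain ⟨m, hm⟩ := hf
  exact (Submodule.eq_bot_iff W).mpr fun w hw ↦ eq_zero_of_pow_apply m w hw (by simp [hm])

theorem isSimpleModule_compHom_of_invtSubmodule [CommRing R] [AddCommGroup M] [Module R M]
    [Nontrivial M] {A : Type*} [Ring A] [Algebra R A] (ρ : A →ₐ[R] Module.End R M)
    (hρ : ∀ W : Submodule R M, (∀ a, W ∈ (ρ a).invtSubmodule) → W = ⊥ ∨ W = ⊤) :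
    @IsSimpleModule A _ M _ (Module.compHom M ρ.toRingHom) := by
  let : Module A M := Module.compHom M ρ.toRingHom
  have smul_eq (a : A) (m : M) : a • m = ρ a m := rfl
  have : IsScalarTower R A M := ⟨fun r a m ↦ by simp only [smul_eq, map_smul, LinearMap.smul_apply]⟩
  refine (isSimpleModule_iff A M).mpr { eq_bot_or_eq_top := fun N ↦ ?_ }
  rw [← Submodule.restrictScalars_eq_bot_iff (S := R),
    ← Submodule.restrictScalars_eq_top_iff (S := R)]
  exact hρ _ fun a _ hm ↦ N.smul_mem a hm

end Modules

section Shifts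

variable {R : Type*} {n : ℕ}

/-- The vector `t_i` of `R^{n+1}` for an arbitrary natural number `i`: the standard basis vector if
`i ≤ n`, and `0` beyond, so that identities between shift operators need no boundary cases. -/
def paddedBasis (R : Type*) [Zero R] [One R] (n i : ℕ) : Fin (n + 1) → R :=
  fun j ↦ if (j : ℕ) = i then 1 else 0

/-- The forward shift `t_i ↦ t_{i+1}` of `R^{n+1}`. -/
def forwardShift (R : Type*) [Semiring R] (n : ℕ) : Module.End R (Fin (n + 1) → R) :=
  LinearMap.pi (Fin.cons 0 fun j ↦ LinearMap.proj j.castSucc)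

/-- The weighted backward shift `t_{i+1} ↦ c_i t_i`, `t_0 ↦ 0` of `R^{n+1}`. Only `c_0, …, c_{n-1}`
matter. -/
def backwardShift [CommSemiring R] (n : ℕ) (c : ℕ → R) : Module.End R (Fin (n + 1) → R) :=
  LinearMap.pi (Fin.snoc (fun j : Fin n ↦ c j • LinearMap.proj j.succ) 0)

/-- The diagonal operator `t_i ↦ d_i t_i` of `R^{n+1}`. -/
def diagonalOp [CommSemiring R] (n : ℕ) (d : ℕ → R) : Module.End R (Fin (n + 1) → R) :=
  LinearMap.pi fun j ↦ d j • LinearMap.proj j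

section PaddedBasis

theorem paddedBasis_val [Zero R] [One R] (i : Fin (n + 1)) :
    paddedBasis R n i = Pi.single i 1 := by
  ext j
  simp [paddedBasis, Pi.single_apply, Fin.ext_iff]

theorem paddedBasis_eq_zero [Zero R] [One R] {i : ℕ} (hi : n < i) : paddedBasis R n i = 0 := by
  ext j
  exact if_neg (by lia)

variable [Semiring R]

theorem linearMap_ext_paddedBasis {M : Type*} [AddCommMonoid M] [Module R M]
    {f g : (Fin (n + 1) → R) →ₗ[R] M}
    (h : ∀ i ≤ n, f (paddedBasis R n i) = g (paddedBasis R n i)) : f = g :=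
  (Pi.basisFun R (Fin (n + 1))).ext fun i ↦ by
    simpa only [Pi.basisFun_apply, paddedBasis_val] using h i i.is_le

theorem eq_top_of_paddedBasis_mem {W : Submodule R (Fin (n + 1) → R)}
    (h : ∀ i ≤ n, paddedBasis R n i ∈ W) : W = ⊤ := by
  rw [← top_le_iff, ← (Pi.basisFun R (Fin (n + 1))).span_eq, Submodule.span_le]
  rintro _ ⟨i, rfl⟩
  simpa only [Pi.basisFun_apply, paddedBasis_val, SetLike.mem_coe] using h i i.is_le

theorem forwardShift_paddedBasis (i : ℕ) :
    forwardShift R n (paddedBasis R n i) = paddedBasis R n (i + 1) := by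
  ext j
  cases j using Fin.cases <;> simp [forwardShift, paddedBasis]

variable {R : Type*} [CommSemiring R]

theorem backwardShift_paddedBasis_zero (c : ℕ → R) :
    backwardShift n c (paddedBasis R n 0) = 0 := by
  ext j
  cases j using Fin.lastCases <;> simp [backwardShift, paddedBasis]

theorem backwardShift_paddedBasis_succ {c : ℕ → R} {i : ℕ} (hc : i = n → c i = 0) :
    backwardShift n c (paddedBasis R n (i + 1)) = c i • paddedBasis R n i := by
  ext j
  cases j using Fin.lastCases with
  | last => simpa [backwardShift, paddedBasis] using fun h : n = i ↦ (hc h.symm).symm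
  | cast j => simp +contextual [backwardShift, paddedBasis]

theorem diagonalOp_paddedBasis (d : ℕ → R) (i : ℕ) :
    diagonalOp n d (paddedBasis R n i) = d i • paddedBasis R n i := by
  ext j
  simp +contextual [diagonalOp, paddedBasis]

end PaddedBasis

section Commutators

theorem diagonalOp_mul_forwardShift [CommSemiring R] {d : ℕ → R} (hd : ∀ i, d (i + 1) = d i + 1) :
    diagonalOp n d * forwardShift R n = forwardShift R n * diagonalOp n d + forwardShift R n :=
  linearMap_ext_paddedBasis fun i _ ↦ by
    simp [forwardShift_paddedBasis, diagonalOp_paddedBasis, hd, add_smul]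

theorem backwardShift_mul_diagonalOp [CommSemiring R] (c : ℕ → R) {d : ℕ → R}
    (hd : ∀ i, d (i + 1) = d i + 1) :
    backwardShift n c * diagonalOp n d = diagonalOp n d * backwardShift n c + backwardShift n c :=
  linearMap_ext_paddedBasis fun i hi ↦ by
    cases i with
    | zero => simp [backwardShift_paddedBasis_zero, diagonalOp_paddedBasis]
    | succ i =>
      have backwardShift_succ := backwardShift_paddedBasis_succ (c := c) fun h : i = n ↦ by lia
      simp [backwardShift_succ, diagonalOp_paddedBasis, hd, add_smul, smul_smul, mul_comm]

theorem backwardShift_mul_forwardShift [CommRing R] {c d : ℕ → R} (hc : c n = 0)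
    (hd_zero : d 0 = -c 0) (hd_succ : ∀ i, d (i + 1) = c i - c (i + 1)) :
    backwardShift n c * forwardShift R n = forwardShift R n * backwardShift n c - diagonalOp n d :=
  have backwardShift_succ (i : ℕ) := backwardShift_paddedBasis_succ fun h : i = n ↦ h ▸ hc
  linearMap_ext_paddedBasis fun i _ ↦ by
    cases i <;> simp [forwardShift_paddedBasis, backwardShift_paddedBasis_zero, backwardShift_succ,
      diagonalOp_paddedBasis, hd_zero, hd_succ, sub_smul]

end Commutators

section InvariantSubspaces

theorem forwardShift_pow_paddedBasis [Semiring R] (m i : ℕ) :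
    (forwardShift R n ^ m) (paddedBasis R n i) = paddedBasis R n (i + m) := by
  induction m with
  | zero => simp
  | succ m ih => rw [pow_succ', Module.End.mul_apply, ih, forwardShift_paddedBasis, add_assoc]

theorem isNilpotent_forwardShift [Semiring R] : IsNilpotent (forwardShift R n) :=
  ⟨n + 1, linearMap_ext_paddedBasis fun i _ ↦ by
    rw [forwardShift_pow_paddedBasis, paddedBasis_eq_zero (by lia), LinearMap.zero_apply]⟩

theorem eq_smul_paddedBasis_of_forwardShift_eq_zero [Semiring R] {w : Fin (n + 1) → R}
    (hw : forwardShift R n w = 0) : w = w (Fin.last n) • paddedBasis R n n := by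
  ext j
  cases j using Fin.lastCases with
  | last => simp [paddedBasis]
  | cast j =>
    have w_castSucc : w j.castSucc = 0 := by simpa [forwardShift] using congrFun hw j.succ
    simp [paddedBasis, w_castSucc, j.isLt.ne]

theorem paddedBasis_last_mem {F : Type*} [DivisionRing F] {W : Submodule F (Fin (n + 1) → F)}
    (hW : W ∈ (forwardShift F n).invtSubmodule) (hne : W ≠ ⊥) :
    paddedBasis F n n ∈ W := by
  have meets_ker : ¬Disjoint W (LinearMap.ker (forwardShift F n)) :=
    mt (eq_bot_of_isNilpotent_of_disjoint_ker isNilpotent_forwardShift hW) hne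
  obtain ⟨w, hwW, hw, hw0⟩ : ∃ w ∈ W, forwardShift F n w = 0 ∧ w ≠ 0 := by
    simpa [Submodule.disjoint_def] using meets_ker
  have hw_eq := eq_smul_paddedBasis_of_forwardShift_eq_zero hw
  have coeff_ne_zero : w (Fin.last n) ≠ 0 := fun h ↦ hw0 (by rw [hw_eq, h, zero_smul])
  exact (W.smul_mem_iff coeff_ne_zero).mp (hw_eq ▸ hwW)

variable {F : Type*} [Field F] {W : Submodule F (Fin (n + 1) → F)}

theorem paddedBasis_mem_of_last_mem {c : ℕ → F} (hc : ∀ i < n, c i ≠ 0)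
    (hW : W ∈ (backwardShift n c).invtSubmodule) (hlast : paddedBasis F n n ∈ W) {i : ℕ}
    (hi : i ≤ n) : paddedBasis F n i ∈ W := by
  induction hi using Nat.decreasingInduction with
  | self => exact hlast
  | of_succ i hi ih =>
    have smul_mem := hW ih
    rw [Submodule.mem_comap, backwardShift_paddedBasis_succ (absurd · hi.ne)] at smul_mem
    exact (W.smul_mem_iff (hc i hi)).mp smul_mem

theorem eq_bot_or_eq_top_of_mem_invtSubmodule_shifts {c : ℕ → F} (hc : ∀ i < n, c i ≠ 0)
    (hforward : W ∈ (forwardShift F n).invtSubmodule)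
    (hbackward : W ∈ (backwardShift n c).invtSubmodule) : W = ⊥ ∨ W = ⊤ :=
  or_iff_not_imp_left.mpr fun hne ↦ eq_top_of_paddedBasis_mem fun _ hi ↦
    paddedBasis_mem_of_last_mem hc hbackward (paddedBasis_last_mem hforward hne) hi

end InvariantSubspaces

end Shifts

section Weights

theorem natCast_ne_zero_of_factorial_ne_zero {R : Type*} [Semiring R] {n i : ℕ}
    (hn : (n.factorial : R) ≠ 0) (hpos : 0 < i) (hi : i ≤ n) : (i : R) ≠ 0 :=
  ne_zero_of_dvd_ne_zero hn (Nat.cast_dvd_cast (Nat.dvd_factorial hpos hi))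

variable (F : Type*) [Field F] (n : ℕ)

/-- The weight `(i+1)(n-i)/2` of `v` on `L_n`, in the indexing `v·t_{i+1} = c_i t_i`. -/
def vWeight (i : ℕ) : F := ((i + 1 : ℕ) : F) / 2 * ((n : F) - ((i + 1 : ℕ) : F) + 1)

/-- The eigenvalue of `ζ` on the vector `t_i` of `L_n`. -/
def zetaWeight (i : ℕ) : F := -(1 / 2 : F) * ((n : F) - 2 * (i : F))

theorem vWeight_self : vWeight F n n = 0 := by
  simp [vWeight]

theorem zetaWeight_zero : zetaWeight F n 0 = -vWeight F n 0 := by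
  simp [zetaWeight, vWeight]

variable [NeZero (2 : F)]

variable {F n} in
theorem vWeight_ne_zero (hn : (n.factorial : F) ≠ 0) {i : ℕ} (hi : i < n) : vWeight F n i ≠ 0 := by
  have factor_eq : (n : F) - ((i + 1 : ℕ) : F) + 1 = ((n - i : ℕ) : F) := by
    push_cast [hi.le]
    ring
  rw [vWeight, factor_eq]
  exact mul_ne_zero
    (div_ne_zero (natCast_ne_zero_of_factorial_ne_zero hn i.succ_pos hi) two_ne_zero)
    (natCast_ne_zero_of_factorial_ne_zero hn (Nat.sub_pos_of_lt hi) (Nat.sub_le n i))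

theorem zetaWeight_succ (i : ℕ) : zetaWeight F n (i + 1) = zetaWeight F n i + 1 := by
  simp only [zetaWeight]
  push_cast
  field_simp
  ring

theorem zetaWeight_succ_eq_sub (i : ℕ) :
    zetaWeight F n (i + 1) = vWeight F n i - vWeight F n (i + 1) := by
  simp only [zetaWeight, vWeight]
  push_cast
  field_simp
  ring

end Weights

section Representations

variable {F : Type} [Field F] {A : Type*} [Ring A]

/-- The images of the generators under the homomorphism `D → A` that kills `x`, `u` and `g - 1`
and takes prescribed values on `y`, `v` and `ζ`. -/
def sl2GenImage (y v ζ : A) : JGen → A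
  | .u => 0
  | .v => v
  | .zeta => ζ
  | .g => 1
  | .ginv => 1
  | .x => 0
  | .y => y

variable [Algebra F A] {y v ζ : A}

theorem lift_sl2GenImage_eq_of_jRel (hζy : ζ * y = y * ζ + y) (hvζ : v * ζ = ζ * v + v)
    (hvy : v * y = y * v - ζ) ⦃a b : FreeAlgebra F JGen⦄ (h : JRel F a b) :
    FreeAlgebra.lift F (sl2GenImage y v ζ) a = FreeAlgebra.lift F (sl2GenImage y v ζ) b := by
  cases h with
  | zy => simpa [sl2GenImage] using hζy
  | vz => simpa [sl2GenImage] using hvζ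
  | vy => simpa [sl2GenImage] using hvy
  | _ => simp [sl2GenImage]

/-- The homomorphism `D → A` that kills `x`, `u` and `g - 1`, attached to elements `y`, `v`, `ζ`
satisfying the rescaled `sl₂` relations. -/
noncomputable def sl2Lift (hζy : ζ * y = y * ζ + y) (hvζ : v * ζ = ζ * v + v)
    (hvy : v * y = y * v - ζ) : D F →ₐ[F] A :=
  RingQuot.liftAlgHom F
    ⟨FreeAlgebra.lift F (sl2GenImage y v ζ), lift_sl2GenImage_eq_of_jRel hζy hvζ hvy⟩

theorem sl2Lift_Dmk_ι (hζy : ζ * y = y * ζ + y) (hvζ : v * ζ = ζ * v + v)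
    (hvy : v * y = y * v - ζ) (a : JGen) :
    sl2Lift hζy hvζ hvy (Dmk F (ι F a)) = sl2GenImage y v ζ a :=
  (RingQuot.liftAlgHom_mkAlgHom_apply F _ (lift_sl2GenImage_eq_of_jRel hζy hvζ hvy) _).trans
    (FreeAlgebra.lift_ι_apply _ _)

variable (F)

theorem tvec_eq_paddedBasis (n : ℕ) (i : Fin (n + 1)) :
    tvec F n i = paddedBasis F n i :=
  (paddedBasis_val i).symm

variable [NeZero (2 : F)] (n : ℕ)

/-- The action of `D` on `L_n = F^{n+1}`. -/
noncomputable def LnRep : D F →ₐ[F] Module.End F (Fin (n + 1) → F) :=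
  sl2Lift (y := forwardShift F n) (v := backwardShift n (vWeight F n))
    (ζ := diagonalOp n (zetaWeight F n))
    (diagonalOp_mul_forwardShift (zetaWeight_succ F n))
    (backwardShift_mul_diagonalOp (vWeight F n) (zetaWeight_succ F n))
    (backwardShift_mul_forwardShift (vWeight_self F n) (zetaWeight_zero F n)
      (zetaWeight_succ_eq_sub F n))

theorem LnRep_DY : LnRep F n (DY F) = forwardShift F n := sl2Lift_Dmk_ι _ _ _ .y

theorem LnRep_DV : LnRep F n (DV F) = backwardShift n (vWeight F n) := sl2Lift_Dmk_ι _ _ _ .v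

theorem LnRep_DZ : LnRep F n (DZ F) = diagonalOp n (zetaWeight F n) := sl2Lift_Dmk_ι _ _ _ .zeta

theorem LnRep_DX : LnRep F n (DX F) = 0 := sl2Lift_Dmk_ι _ _ _ .x

theorem LnRep_DU : LnRep F n (DU F) = 0 := sl2Lift_Dmk_ι _ _ _ .u

theorem LnRep_DG : LnRep F n (DG F) = 1 := sl2Lift_Dmk_ι _ _ _ .g

variable {n} in
theorem isSimpleModule_LnRep (hn : (n.factorial : F) ≠ 0) :
    @IsSimpleModule (D F) _ (Fin (n + 1) → F) _
      (Module.compHom (Fin (n + 1) → F) (LnRep F n).toRingHom) :=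
  isSimpleModule_compHom_of_invtSubmodule (LnRep F n) fun _ hW ↦
    eq_bot_or_eq_top_of_mem_invtSubmodule_shifts (fun _ ↦ vWeight_ne_zero hn)
      (LnRep_DY F n ▸ hW (DY F)) (LnRep_DV F n ▸ hW (DV F))

variable {n} (i : Fin (n + 1))

theorem LnRep_DY_tvec : LnRep F n (DY F) (tvec F n i) =
    if h : (i : ℕ) + 1 < n + 1 then tvec F n ⟨(i : ℕ) + 1, h⟩ else 0 := by
  rw [LnRep_DY, tvec_eq_paddedBasis, forwardShift_paddedBasis]
  split_ifs with h
  · rw [tvec_eq_paddedBasis]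
  · exact paddedBasis_eq_zero (by lia)

theorem LnRep_DV_tvec : LnRep F n (DV F) (tvec F n i) =
    if 0 < (i : ℕ) then
      (((i : ℕ) : F) / 2 * ((n : F) - ((i : ℕ) : F) + 1)) •
        tvec F n ⟨(i : ℕ) - 1, Nat.lt_of_le_of_lt (Nat.sub_le _ _) i.isLt⟩
    else 0 := by
  simp only [LnRep_DV, tvec_eq_paddedBasis]
  rcases i with ⟨_ | i, _⟩
  · exact backwardShift_paddedBasis_zero _
  · exact backwardShift_paddedBasis_succ fun h ↦ by lia

theorem LnRep_DZ_tvec : LnRep F n (DZ F) (tvec F n i) =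
    (-(1 / 2 : F) * ((n : F) - 2 * ((i : ℕ) : F))) • tvec F n i := by
  rw [LnRep_DZ, tvec_eq_paddedBasis, diagonalOp_paddedBasis, zetaWeight]

end Representations

theorem Ln_module_structure_general (F : Type) [Field F] [NeZero (2 : F)] (n : ℕ)
    (hn : (n.factorial : F) ≠ 0) :
    ∃ ρ : D F →ₐ[F] Module.End F (Fin (n + 1) → F),
      (∀ i : Fin (n + 1), ρ (DY F) (tvec F n i) =
          if h : (i : ℕ) + 1 < n + 1 then tvec F n ⟨(i : ℕ) + 1, h⟩ else 0) ∧
      (∀ i : Fin (n + 1), ρ (DV F) (tvec F n i) =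
          if 0 < (i : ℕ) then
            (((i : ℕ) : F) / 2 * ((n : F) - ((i : ℕ) : F) + 1)) •
              tvec F n ⟨(i : ℕ) - 1, Nat.lt_of_le_of_lt (Nat.sub_le _ _) i.isLt⟩
          else 0) ∧
      (∀ i : Fin (n + 1), ρ (DZ F) (tvec F n i) =
          (-(1 / 2 : F) * ((n : F) - 2 * ((i : ℕ) : F))) • tvec F n i) ∧
      ρ (DX F) = 0 ∧ ρ (DU F) = 0 ∧ ρ (DG F) = 1 ∧
      Module.finrank F (Fin (n + 1) → F) = n + 1 ∧
      @IsSimpleModule (D F) _ (Fin (n + 1) → F) _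
        (Module.compHom (Fin (n + 1) → F) ρ.toRingHom) :=
  ⟨LnRep F n, LnRep_DY_tvec F, LnRep_DV_tvec F, LnRep_DZ_tvec F, LnRep_DX F n, LnRep_DU F n,
    LnRep_DG F n, Module.finrank_fin_fun F, isSimpleModule_LnRep F hn⟩

/-- for every `n ∈ ℕ` there is a `D`-module structure (equivalently, a `k`-algebra
map `ρ : D → End_k(L_n)`) on the `(n+1)`-dimensional space `L_n` with basis `t_0, …, t_n`,
given by `y·t_i = t_{i+1}` (with `t_{n+1} = 0`), `v·t_i = (i/2)(n−i+1)·t_{i−1}` (with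
`t_{−1} = 0`), `ζ·t_i = −(1/2)(n−2i)·t_i`, `x·t_i = 0`, `u·t_i = 0`, `g·t_i = t_i`; and `L_n`
is a simple `D`-module of dimension `n + 1`. -/
theorem Ln_module_structure (n : ℕ) :
    ∃ ρ : D k →ₐ[k] Module.End k (Fin (n + 1) → k),
      (∀ i : Fin (n + 1), ρ (DY k) (tvec k n i) =
          if h : (i : ℕ) + 1 < n + 1 then tvec k n ⟨(i : ℕ) + 1, h⟩ else 0) ∧
      (∀ i : Fin (n + 1), ρ (DV k) (tvec k n i) =
          if 0 < (i : ℕ) then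
            (((i : ℕ) : k) / 2 * ((n : k) - ((i : ℕ) : k) + 1)) •
              tvec k n ⟨(i : ℕ) - 1, Nat.lt_of_le_of_lt (Nat.sub_le _ _) i.isLt⟩
          else 0) ∧
      (∀ i : Fin (n + 1), ρ (DZ k) (tvec k n i) =
          (-(1 / 2 : k) * ((n : k) - 2 * ((i : ℕ) : k))) • tvec k n i) ∧
      ρ (DX k) = 0 ∧ ρ (DU k) = 0 ∧ ρ (DG k) = 1 ∧
      Module.finrank k (Fin (n + 1) → k) = n + 1 ∧
      @IsSimpleModule (D k) _ (Fin (n + 1) → k) _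
        (Module.compHom (Fin (n + 1) → k) ρ.toRingHom) := by
  exact Ln_module_structure_general k n (Nat.cast_ne_zero.mpr n.factorial_ne_zero)
end

section
/- The square of the antipode of D is conjugation by g⁻¹, i.e. S²(h) = g⁻¹ h g for all h ∈ D; moreover for every finite-dimensional D-module V with representation ρ and every D-module endomorphism f of V, one has Tr(f ∘ ρ(g)) = Tr(f ∘ ρ(g⁻¹)). Hence D is a spherical Hopf algebra with pivot g⁻¹. -/
open FreeAlgebra

variable (k : Type) [Field k] [IsAlgClosed k] [CharZero k]

set_option synthInstance.maxHeartbeats 1000000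
set_option maxHeartbeats 2000000

open scoped TensorProduct

/-!
The square of the antipode and conjugation by `g⁻¹` are both algebra endomorphisms, so it suffices
to compare them on the generators. If `Δ a = a ⊗ 1 + g ⊗ a` with `g` group-like, then
`S a = -g⁻¹ a` and hence `S² a = g⁻¹ a g`; this settles `x` and `y`, and for `g = 1` shows that
`S²` fixes `u` and `ζ`, which commute with `g`. Finally `S² v = v + [u, ζ] = v + u = g⁻¹ v g`.

For the traces, `[y, u] = g - 1` and `g⁻¹` commutes with `u`, so
`[y + g⁻¹ y, u] = (g - 1) + (1 - g⁻¹) = g - g⁻¹`. Composing a commutator of `D` with a `D`-linear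
map `f` gives a commutator of `k`-linear maps, whose trace vanishes.
-/

section HopfAlgebra

open Coalgebra HopfAlgebra

/-- The Hopf algebra structure on an algebra `A` with comultiplication `Δ`, counit `ε` and
antipode `S`. It extends the given algebra structure, so facts about `A` as an algebra apply. -/
abbrev hopfAlgebraOfAlgHom {R A : Type*} [CommSemiring R] [Semiring A] [Algebra R A]
    (Δ : A →ₐ[R] A ⊗[R] A) (ε : A →ₐ[R] R) (S : A →ₗ[R] A)
    (hcoassoc : ∀ a, TensorProduct.assoc R A A A (Δ.toLinearMap.rTensor A (Δ a)) =
      Δ.toLinearMap.lTensor A (Δ a))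
    (hcounit₁ : ∀ a, TensorProduct.lid R A (ε.toLinearMap.rTensor A (Δ a)) = a)
    (hcounit₂ : ∀ a, TensorProduct.rid R A (ε.toLinearMap.lTensor A (Δ a)) = a)
    (hS₁ : ∀ a, LinearMap.mul' R A (S.rTensor A (Δ a)) = algebraMap R A (ε a))
    (hS₂ : ∀ a, LinearMap.mul' R A (S.lTensor A (Δ a)) = algebraMap R A (ε a)) :
    HopfAlgebra R A where
  __ := Bialgebra.ofAlgHom Δ ε (AlgHom.ext hcoassoc)
    (AlgHom.ext fun a ↦ (TensorProduct.lid R A).eq_symm_apply.2 (hcounit₁ a))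
    (AlgHom.ext fun a ↦ (TensorProduct.rid R A).eq_symm_apply.2 (hcounit₂ a))
  antipode := S
  mul_antipode_rTensor_comul := LinearMap.ext hS₁
  mul_antipode_lTensor_comul := LinearMap.ext hS₂

/-- The element `a` is `(1, g)`-skew-primitive: `ε a = 0` and `Δ a = a ⊗ 1 + g ⊗ a`.
The primitive elements are the case `g = 1`. -/
structure IsSkewPrimitiveElem (R : Type*) {A : Type*} [CommSemiring R] [Semiring A]
    [Bialgebra R A] (g a : A) : Prop where
  counit_eq_zero : counit (R := R) a = 0
  comul_eq : comul a = a ⊗ₜ[R] 1 + g ⊗ₜ[R] a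

section Semiring

variable {R A : Type*} [CommSemiring R] [Semiring A] [HopfAlgebra R A]

theorem antipode_units_of_isGroupLikeElem {g : Aˣ} (hg : IsGroupLikeElem R (g : A)) :
    antipode R (g : A) = ↑g⁻¹ :=
  Units.eq_inv_of_mul_eq_one_left hg.mul_antipode_cancel

variable (R A) in
/-- The square of the antipode, as an algebra endomorphism. -/
noncomputable def antipodeSq : A →ₐ[R] A :=
  .ofLinearMap (antipode R ∘ₗ antipode R) (by simp) (by simp [antipode_mul_antidistrib])

theorem antipode_antipode_eq_conj_of_adjoin_eq_top (g : Aˣ) {s : Set A}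
    (hs : Algebra.adjoin R s = ⊤)
    (hconj : ∀ a ∈ s, antipode R (antipode R a) = ↑g⁻¹ * a * ↑g) (a : A) :
    antipode R (antipode R a) = ↑g⁻¹ * a * ↑g := by
  have antipodeSq_eq : antipodeSq R A =
      MulSemiringAction.toAlgHom R A (ConjAct.toConjAct g⁻¹) :=
    AlgHom.ext_of_adjoin_eq_top hs fun a ha ↦ by
      simpa [antipodeSq, ConjAct.units_smul_def] using hconj a ha
  simpa [antipodeSq, ConjAct.units_smul_def] using DFunLike.congr_fun antipodeSq_eq a

end Semiring

section Ring

variable {R A : Type*} [CommSemiring R] [Ring A] [HopfAlgebra R A] {a b c : A}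

namespace IsSkewPrimitiveElem

theorem antipode_eq {g : A} (ha : IsSkewPrimitiveElem R g a) :
    antipode R a = -(antipode R g * a) := by
  have antipode_add : antipode R a + antipode R g * a = 0 := by
    simpa [ha.comul_eq, ha.counit_eq_zero, -mul_antipode_rTensor_comul_apply] using
      mul_antipode_rTensor_comul_apply (R := R) a
  exact eq_neg_of_add_eq_zero_left antipode_add

theorem antipode_antipode {g : Aˣ} (ha : IsSkewPrimitiveElem R (g : A) a)
    (hg : IsGroupLikeElem R (g : A)) :
    antipode R (antipode R a) = ↑g⁻¹ * a * ↑g := by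
  rw [ha.antipode_eq, map_neg, antipode_mul_antidistrib, hg.antipode_antipode, ha.antipode_eq,
    antipode_units_of_isGroupLikeElem hg, neg_mul, neg_neg]

theorem antipode_eq_neg (ha : IsSkewPrimitiveElem R 1 a) : antipode R a = -a := by
  simpa using ha.antipode_eq

theorem antipode_antipode_eq_self (ha : IsSkewPrimitiveElem R 1 a) :
    antipode R (antipode R a) = a := by
  simp [ha.antipode_eq_neg]

end IsSkewPrimitiveElem

theorem antipode_antipode_of_comul_eq_add_tmul (hb : IsSkewPrimitiveElem R 1 b)
    (hc : IsSkewPrimitiveElem R 1 c) (hεa : counit (R := R) a = 0)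
    (hΔa : comul a = a ⊗ₜ[R] 1 + 1 ⊗ₜ[R] a + b ⊗ₜ[R] c) :
    antipode R (antipode R a) = a + ⁅c, b⁆ := by
  have antipode_add : antipode R a + a + antipode R b * c = 0 := by
    simpa [hΔa, hεa, -mul_antipode_rTensor_comul_apply] using
      mul_antipode_rTensor_comul_apply (R := R) a
  have antipode_eq : antipode R a = b * c - a := by
    rw [hb.antipode_eq_neg, neg_mul] at antipode_add
    rw [← sub_eq_zero, ← antipode_add]
    abel
  rw [antipode_eq, map_sub, antipode_mul_antidistrib, hb.antipode_eq_neg, hc.antipode_eq_neg,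
    antipode_eq, neg_mul_neg, Ring.lie_def]
  abel

end Ring

end HopfAlgebra

section Trace

variable {R A M : Type*} [CommRing R] [Ring A] [Algebra R A] [AddCommGroup M] [Module R M]
  [Module A M] [IsScalarTower R A M]

theorem trace_comp_toModuleEnd_lie (f : M →ₗ[A] M) (a b : A) :
    LinearMap.trace R M (f.restrictScalars R ∘ₗ Module.toModuleEnd R M ⁅a, b⁆) = 0 := by
  have comp_lie : f.restrictScalars R ∘ₗ Module.toModuleEnd R M ⁅a, b⁆ =
      ⁅f.restrictScalars R ∘ₗ Module.toModuleEnd R M a, Module.toModuleEnd R M b⁆ := by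
    ext m
    simp [Ring.lie_def, sub_smul, mul_smul]
  rw [comp_lie, LinearMap.trace_lie]

theorem trace_comp_toModuleEnd_eq_of_sub_eq_lie (f : M →ₗ[A] M) {a b c d : A}
    (h : a - b = ⁅c, d⁆) :
    LinearMap.trace R M (f.restrictScalars R ∘ₗ Module.toModuleEnd R M a) =
      LinearMap.trace R M (f.restrictScalars R ∘ₗ Module.toModuleEnd R M b) := by
  rw [← sub_eq_zero, ← map_sub, ← LinearMap.comp_sub, ← map_sub, h, trace_comp_toModuleEnd_lie]

end Trace

namespace D

variable (K : Type) [Field K]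

theorem adjoin_range_Dmk_ι : Algebra.adjoin K (Set.range fun j ↦ Dmk K (ι K j)) = ⊤ := by
  have Dmk_surjective : Function.Surjective (Dmk K) := RingQuot.mkAlgHom_surjective K (JRel K)
  rw [Set.range_comp' (Dmk K) (ι K), ← AlgHom.map_adjoin, FreeAlgebra.adjoin_range_ι,
    Algebra.map_top, AlgHom.range_eq_top]
  exact Dmk_surjective

variable {K} in
theorem Dmk_eq_of_rel {a b : FreeAlgebra K JGen} (h : JRel K a b) : Dmk K a = Dmk K b :=
  RingQuot.mkAlgHom_rel K h

theorem g_mul_ginv : DG K * DGinv K = 1 := by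
  simpa [DG, DGinv] using Dmk_eq_of_rel (JRel.gginv (k := K))

theorem ginv_mul_g : DGinv K * DG K = 1 := by
  simpa [DG, DGinv] using Dmk_eq_of_rel (JRel.ginvg (k := K))

/-- The group-like generator `g`, with inverse `DGinv`, as a unit of `D`. -/
noncomputable def gUnit : (D K)ˣ := ⟨DG K, DGinv K, g_mul_ginv K, ginv_mul_g K⟩

theorem commute_zeta_g : Commute (DZ K) (DG K) := by
  simpa [DZ, DG, commute_iff_eq] using Dmk_eq_of_rel (JRel.zg (k := K))

theorem commute_u_g : Commute (DU K) (DG K) := by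
  simpa [DU, DG, commute_iff_eq] using Dmk_eq_of_rel (JRel.ug (k := K))

theorem v_mul_g : DV K * DG K = DG K * (DV K + DU K) := by
  simpa [DV, DG, DU, mul_add] using Dmk_eq_of_rel (JRel.vg (k := K))

theorem lie_u_zeta : ⁅DU K, DZ K⁆ = DU K := by
  have u_mul_zeta : DU K * DZ K = DZ K * DU K + DU K := by
    simpa [DU, DZ] using Dmk_eq_of_rel (JRel.uz (k := K))
  rw [Ring.lie_def, u_mul_zeta, add_sub_cancel_left]

theorem lie_y_u : ⁅DY K, DU K⁆ = DG K - 1 := by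
  have u_mul_y : DU K * DY K = DY K * DU K + (1 - DG K) := by
    simpa [DU, DY, DG] using Dmk_eq_of_rel (JRel.uy (k := K))
  rw [Ring.lie_def, u_mul_y, sub_add_cancel_left, neg_sub]

theorem ginv_mul_zeta_mul_g : DGinv K * DZ K * DG K = DZ K := by
  rw [mul_assoc, commute_zeta_g, ← mul_assoc, ginv_mul_g, one_mul]

theorem ginv_mul_u_mul_g : DGinv K * DU K * DG K = DU K := by
  rw [mul_assoc, commute_u_g, ← mul_assoc, ginv_mul_g, one_mul]

theorem ginv_mul_v_mul_g : DGinv K * DV K * DG K = DV K + DU K := by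
  rw [mul_assoc, v_mul_g, ← mul_assoc, ginv_mul_g, one_mul]

theorem g_sub_ginv_eq_lie : DG K - DGinv K = ⁅DY K + DGinv K * DY K, DU K⁆ := by
  have commute_ginv_u : Commute (DGinv K) (DU K) :=
    (show Commute (DU K) (gUnit K) from commute_u_g K).units_inv_right.symm
  have lie_ginv_mul_y_u : ⁅DGinv K * DY K, DU K⁆ = 1 - DGinv K := by
    rw [Ring.lie_def, ← mul_assoc (DU K), ← commute_ginv_u.eq, mul_assoc, mul_assoc, ← mul_sub,
      ← Ring.lie_def, lie_y_u, mul_sub, ginv_mul_g, mul_one]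
  rw [Ring.lie_def, add_mul, mul_add, add_sub_add_comm, ← Ring.lie_def, ← Ring.lie_def, lie_y_u,
    lie_ginv_mul_y_u, sub_add_sub_cancel]

end D

open D in
theorem D_spherical_general {K : Type} [Field K]
    -- in characteristic two the coefficient `1 / 2` in `JRel` is the junk value `0`
    [NeZero (2 : K)]
    (Δ : D K →ₐ[K] D K ⊗[K] D K) (ε : D K →ₐ[K] K) (S : D K →ₗ[K] D K)
    (hcoassoc : ∀ a, TensorProduct.assoc K (D K) (D K) (D K) (Δ.toLinearMap.rTensor (D K) (Δ a)) =
      Δ.toLinearMap.lTensor (D K) (Δ a))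
    (hcounit₁ : ∀ a, TensorProduct.lid K (D K) (ε.toLinearMap.rTensor (D K) (Δ a)) = a)
    (hcounit₂ : ∀ a, TensorProduct.rid K (D K) (ε.toLinearMap.lTensor (D K) (Δ a)) = a)
    (hS₁ : ∀ a, LinearMap.mul' K (D K) (S.rTensor (D K) (Δ a)) = algebraMap K (D K) (ε a))
    (hS₂ : ∀ a, LinearMap.mul' K (D K) (S.lTensor (D K) (Δ a)) = algebraMap K (D K) (ε a))
    (hΔg : Δ (DG K) = DG K ⊗ₜ[K] DG K)
    (hΔu : Δ (DU K) = DU K ⊗ₜ[K] 1 + 1 ⊗ₜ[K] DU K)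
    (hΔζ : Δ (DZ K) = DZ K ⊗ₜ[K] 1 + 1 ⊗ₜ[K] DZ K)
    (hΔx : Δ (DX K) = DX K ⊗ₜ[K] 1 + DG K ⊗ₜ[K] DX K)
    (hΔy : Δ (DY K) = DY K ⊗ₜ[K] 1 + DG K ⊗ₜ[K] DY K)
    (hΔv : Δ (DV K) = DV K ⊗ₜ[K] 1 + 1 ⊗ₜ[K] DV K + DZ K ⊗ₜ[K] DU K)
    (hεg : ε (DG K) = 1) (hεu : ε (DU K) = 0) (hεζ : ε (DZ K) = 0) (hεx : ε (DX K) = 0)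
    (hεy : ε (DY K) = 0) (hεv : ε (DV K) = 0) :
    (∀ h : D K, S (S h) = DGinv K * h * DG K) ∧
    (∀ (V : Type*) (_ : AddCommGroup V) (_ : Module K V) (_ : Module (D K) V)
        (_ : IsScalarTower K (D K) V) (_ : FiniteDimensional K V) (f : V →ₗ[D K] V),
      LinearMap.trace K V (f.restrictScalars K ∘ₗ Module.toModuleEnd K V (DG K)) =
        LinearMap.trace K V (f.restrictScalars K ∘ₗ Module.toModuleEnd K V (DGinv K))) := by
  let := hopfAlgebraOfAlgHom Δ ε S hcoassoc hcounit₁ hcounit₂ hS₁ hS₂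
  have hg : IsGroupLikeElem K (gUnit K : D K) := ⟨hεg, hΔg⟩
  have hginv : IsGroupLikeElem K (↑(gUnit K)⁻¹ : D K) :=
    antipode_units_of_isGroupLikeElem hg ▸ hg.antipode
  have hu : IsSkewPrimitiveElem K 1 (DU K) := ⟨hεu, hΔu⟩
  have hζ : IsSkewPrimitiveElem K 1 (DZ K) := ⟨hεζ, hΔζ⟩
  have hx : IsSkewPrimitiveElem K (gUnit K : D K) (DX K) := ⟨hεx, hΔx⟩
  have hy : IsSkewPrimitiveElem K (gUnit K : D K) (DY K) := ⟨hεy, hΔy⟩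
  refine ⟨antipode_antipode_eq_conj_of_adjoin_eq_top (gUnit K) (adjoin_range_Dmk_ι K) ?_,
    fun V _ _ _ _ _ f ↦ trace_comp_toModuleEnd_eq_of_sub_eq_lie f (g_sub_ginv_eq_lie K)⟩
  rintro _ ⟨_ | _ | _ | _ | _ | _ | _, rfl⟩
  case u => exact hu.antipode_antipode_eq_self.trans (ginv_mul_u_mul_g K).symm
  case v =>
    exact (antipode_antipode_of_comul_eq_add_tmul hζ hu hεv hΔv).trans <|
      (congrArg _ (lie_u_zeta K)).trans (ginv_mul_v_mul_g K).symm
  case zeta => exact hζ.antipode_antipode_eq_self.trans (ginv_mul_zeta_mul_g K).symm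
  case g =>
    exact hg.antipode_antipode.trans <|
      show (gUnit K : D K) = ↑(gUnit K)⁻¹ * gUnit K * gUnit K by simp
  case ginv => exact hginv.antipode_antipode.trans (Units.inv_mul_cancel_right _ (gUnit K)).symm
  case x => exact hx.antipode_antipode hg
  case y => exact hy.antipode_antipode hg

/-- `D` is a Hopf algebra with the comultiplication `Δ` determined by
`Δ(g) = g⊗g`, `Δ(u) = u⊗1 + 1⊗u`, `Δ(ζ) = ζ⊗1 + 1⊗ζ`, `Δ(x) = x⊗1 + g⊗x`,
`Δ(y) = y⊗1 + g⊗y`, `Δ(v) = v⊗1 + 1⊗v + ζ⊗u`, the counit `ε` with `ε(g) = 1`,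
`ε(u) = ε(v) = ε(ζ) = ε(x) = ε(y) = 0`, and antipode `S`.  Then the square of the antipode
is conjugation by `g⁻¹`, i.e. `S²(h) = g⁻¹ h g` for all `h ∈ D`, and for every
finite-dimensional `D`-module `V` with representation `ρ` and every `D`-module endomorphism
`f` of `V` one has `Tr(f ∘ ρ(g)) = Tr(f ∘ ρ(g⁻¹))`.  Hence `D` is a spherical Hopf algebra
with pivot `g⁻¹`. -/
theorem D_spherical
    -- the comultiplication, an algebra map
    (Δ : D k →ₐ[k] (D k) ⊗[k] (D k))
    -- the counit, an algebra map
    (ε : D k →ₐ[k] k)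
    -- the antipode
    (S : D k →ₗ[k] D k)
    -- coassociativity
    (hcoassoc : ∀ a : D k,
      TensorProduct.assoc k (D k) (D k) (D k) ((Δ.toLinearMap.rTensor (D k)) (Δ a)) =
        (Δ.toLinearMap.lTensor (D k)) (Δ a))
    -- the counit laws
    (hcounit₁ : ∀ a : D k, TensorProduct.lid k (D k) ((ε.toLinearMap.rTensor (D k)) (Δ a)) = a)
    (hcounit₂ : ∀ a : D k, TensorProduct.rid k (D k) ((ε.toLinearMap.lTensor (D k)) (Δ a)) = a)
    -- the antipode axioms
    (hS₁ : ∀ a : D k,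
      LinearMap.mul' k (D k) ((S.rTensor (D k)) (Δ a)) = algebraMap k (D k) (ε a))
    (hS₂ : ∀ a : D k,
      LinearMap.mul' k (D k) ((S.lTensor (D k)) (Δ a)) = algebraMap k (D k) (ε a))
    -- the values of the comultiplication on the generators
    (hΔg : Δ (DG k) = DG k ⊗ₜ[k] DG k)
    (hΔginv : Δ (DGinv k) = DGinv k ⊗ₜ[k] DGinv k)
    (hΔu : Δ (DU k) = DU k ⊗ₜ[k] 1 + 1 ⊗ₜ[k] DU k)
    (hΔζ : Δ (DZ k) = DZ k ⊗ₜ[k] 1 + 1 ⊗ₜ[k] DZ k)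
    (hΔx : Δ (DX k) = DX k ⊗ₜ[k] 1 + DG k ⊗ₜ[k] DX k)
    (hΔy : Δ (DY k) = DY k ⊗ₜ[k] 1 + DG k ⊗ₜ[k] DY k)
    (hΔv : Δ (DV k) = DV k ⊗ₜ[k] 1 + 1 ⊗ₜ[k] DV k + DZ k ⊗ₜ[k] DU k)
    -- the values of the counit on the generators
    (hεg : ε (DG k) = 1) (hεginv : ε (DGinv k) = 1) (hεu : ε (DU k) = 0)
    (hεζ : ε (DZ k) = 0) (hεx : ε (DX k) = 0) (hεy : ε (DY k) = 0) (hεv : ε (DV k) = 0) :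
    (∀ h : D k, S (S h) = DGinv k * h * DG k) ∧
    (∀ (V : Type) (_ : AddCommGroup V) (_ : Module k V) (_ : Module (D k) V)
        (_ : IsScalarTower k (D k) V) (_ : FiniteDimensional k V) (f : V →ₗ[D k] V),
      LinearMap.trace k V
          ((f.restrictScalars k) ∘ₗ (Module.toModuleEnd k V (DG k) : V →ₗ[k] V)) =
        LinearMap.trace k V
          ((f.restrictScalars k) ∘ₗ (Module.toModuleEnd k V (DGinv k) : V →ₗ[k] V))) :=
  D_spherical_general Δ ε S hcoassoc hcounit₁ hcounit₂ hS₁ hS₂ hΔg hΔu hΔζ hΔx hΔy hΔv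
    hεg hεu hεζ hεx hεy hεv
end

section
/- Let q = ux + 2 + 2g ∈ D and let X be the multiplicative submonoid of D generated by x and q. Then every element of X is a regular element of D (neither a left nor a right zero divisor), and X satisfies the left and right Ore conditions in D: for every a ∈ D and m ∈ X there exist b, b' ∈ D and m₁, m₂ ∈ X with m₁ a = b m and a m₂ = m b'. Hence the localization D' of D at X exists. -/
open FreeAlgebra

variable (k : Type) [Field k] [IsAlgClosed k] [CharZero k]

set_option synthInstance.maxHeartbeats 1000000
set_option maxHeartbeats 2000000

/-!
The elements `u`, `x`, `g`, `g⁻¹` generate a commutative subalgebra `A` of `D`, on which the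
commutators with `ζ`, `y` and `v` act as derivations. Hence for `s ∈ A` every generator of `D` is
killed by `(ad s)²`, so `ad s` is locally nilpotent on `D`. If `(ad s)ⁿ a = 0`, then `sⁿ a ∈ D s`
and `a sⁿ ∈ s D`, which are the Ore conditions for the powers of `s`; they pass to products.

Regularity comes from a basis of `D`: rearranging the relations exhibits `D` as the iterated Ore
extension `A[ζ][y][v]` over the Laurent polynomial ring `A = k[u, x, g, g⁻¹]`. It is free as a left
`A`-module, so nonzero elements of `A` are left regular, and by local nilpotency of `ad s` they are
also right regular.
-/

attribute [local instance] LieRing.ofAssociativeRing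

section LocallyAdNilpotent

open LieAlgebra LieSubalgebra

variable {K R : Type*} [CommRing K] [Ring R] [Algebra K R] {s : R}

theorem lie_mul_eq (s a b : R) : ⁅s, a * b⁆ = ⁅s, a⁆ * b + a * ⁅s, b⁆ := by
  simp only [Ring.lie_def]
  noncomm_ring

theorem mul_mem_engel {a b : R} (ha : a ∈ engel K s) (hb : b ∈ engel K s) :
    a * b ∈ engel K s := by
  obtain ⟨m, hm⟩ := (mem_engel_iff K s a).1 ha
  obtain ⟨n, hn⟩ := (mem_engel_iff K s b).1 hb
  refine (mem_engel_iff K s _).2 ⟨m + n, ?_⟩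
  clear ha hb
  induction m generalizing n a b with
  | zero => simp_all
  | succ m ihm =>
    induction n generalizing a b with
    | zero => simp_all
    | succ n ihn =>
      have left : (ad K R s ^ (m + (n + 1))) (⁅s, a⁆ * b) = 0 := ihm (by rwa [pow_succ] at hm) _ hn
      have right : (ad K R s ^ (m + 1 + n)) (a * ⁅s, b⁆) = 0 := ihn hm (by rwa [pow_succ] at hn)
      rw [add_right_comm, add_assoc] at right
      rw [add_right_comm, pow_succ, Module.End.mul_apply, ad_apply, lie_mul_eq, map_add,
        left, right, add_zero]

theorem mem_engel_of_commute_lie {a : R} (h : Commute s ⁅s, a⁆) : a ∈ engel K s :=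
  (mem_engel_iff K s a).2 ⟨2, by rw [pow_two, Module.End.mul_apply]; exact h.lie_eq⟩

theorem engel_eq_top_of_adjoin_eq_top {T : Set R} (hT : Algebra.adjoin K T = ⊤)
    (h : ∀ a ∈ T, a ∈ engel K s) : engel K s = ⊤ := by
  refine eq_top_iff.2 fun a _ => ?_
  have ha : a ∈ Algebra.adjoin K T := hT ▸ Algebra.mem_top
  clear * - ha h
  induction ha using Algebra.adjoin_induction with
  | mem a ha => exact h a ha
  | algebraMap r => exact mem_engel_of_commute_lie (by simp [Algebra.commutes, Ring.lie_def])
  | add a b _ _ ha hb => exact add_mem ha hb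
  | mul a b _ _ ha hb => exact mul_mem_engel ha hb

theorem exists_pow_mul_eq_mul {a : R} (ha : a ∈ engel K s) : ∃ n : ℕ, ∃ b, s ^ n * a = b * s := by
  obtain ⟨n, hn⟩ := (mem_engel_iff K s a).1 ha
  refine ⟨n, ?_⟩
  clear ha
  induction n generalizing a with
  | zero => exact ⟨0, by simp_all⟩
  | succ n ih =>
    obtain ⟨b, hb⟩ := ih (a := ⁅s, a⁆) (by rwa [pow_succ] at hn)
    refine ⟨b + s ^ n * a, ?_⟩
    rw [add_mul, ← hb, Ring.lie_def]
    noncomm_ring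

theorem exists_mul_pow_eq_mul {a : R} (ha : a ∈ engel K s) : ∃ n : ℕ, ∃ b, a * s ^ n = s * b := by
  obtain ⟨n, hn⟩ := (mem_engel_iff K s a).1 ha
  refine ⟨n, ?_⟩
  clear ha
  induction n generalizing a with
  | zero => exact ⟨0, by simp_all⟩
  | succ n ih =>
    obtain ⟨b, hb⟩ := ih (a := ⁅s, a⁆) (by rwa [pow_succ] at hn)
    refine ⟨a * s ^ n - b, ?_⟩
    rw [mul_sub, ← hb, Ring.lie_def, pow_succ']
    noncomm_ring

theorem isRightRegular_of_engel_eq_top (h : engel K s = ⊤) (hs : IsLeftRegular s) :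
    IsRightRegular s := by
  refine isRightRegular_iff_left_eq_zero_of_mul.2 fun a has => ?_
  obtain ⟨n, hn⟩ := (mem_engel_iff K s a).1 (h ▸ LieSubalgebra.mem_top a)
  -- Since `a * s = 0`, the operator `ad s` acts on `a` as left multiplication by `s`.
  have ad_pow_eq (m : ℕ) : (ad K R s ^ m) a = s ^ m * a := by
    induction m with
    | zero => simp
    | succ m ih =>
      rw [pow_succ', Module.End.mul_apply, ih, ad_apply, Ring.lie_def, mul_assoc _ a, has,
        mul_zero, sub_zero, pow_succ', mul_assoc]
  exact isLeftRegular_iff_right_eq_zero_of_mul.1 (hs.pow n) a (by rw [← ad_pow_eq, hn])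

end LocallyAdNilpotent

section OreClosure

open LieSubalgebra Submonoid

variable {K R : Type*} [CommRing K] [Ring R] [Algebra K R] {S : Set R} {m : R}

theorem isRegular_of_mem_closure (hS : ∀ s ∈ S, engel K s = ⊤) (hreg : ∀ s ∈ S, IsLeftRegular s)
    (hm : m ∈ closure S) : IsLeftRegular m ∧ IsRightRegular m := by
  induction hm using closure_induction with
  | mem s hs => exact ⟨hreg s hs, isRightRegular_of_engel_eq_top (hS s hs) (hreg s hs)⟩
  | one => exact ⟨isRegular_one.left, isRegular_one.right⟩
  | mul a b _ _ ha hb => exact ⟨ha.1.mul hb.1, ha.2.mul hb.2⟩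

theorem left_ore_of_mem_closure (hS : ∀ s ∈ S, engel K s = ⊤) (a : R)
    (hm : m ∈ closure S) : ∃ b, ∃ m₁ ∈ closure S, m₁ * a = b * m := by
  induction hm using closure_induction generalizing a with
  | mem s hs =>
    obtain ⟨n, b, hb⟩ := exists_pow_mul_eq_mul (hS s hs ▸ LieSubalgebra.mem_top a)
    exact ⟨b, s ^ n, pow_mem (subset_closure hs) n, hb⟩
  | one => exact ⟨a, 1, one_mem _, by simp⟩
  | mul p r _ _ hp hr =>
    obtain ⟨b, m₁, hm₁, hb⟩ := hr a
    obtain ⟨c, m₂, hm₂, hc⟩ := hp b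
    exact ⟨c, m₂ * m₁, mul_mem hm₂ hm₁, by rw [mul_assoc, hb, ← mul_assoc, hc, mul_assoc]⟩

theorem right_ore_of_mem_closure (hS : ∀ s ∈ S, engel K s = ⊤) (a : R)
    (hm : m ∈ closure S) : ∃ b, ∃ m₂ ∈ closure S, a * m₂ = m * b := by
  induction hm using closure_induction generalizing a with
  | mem s hs =>
    obtain ⟨n, b, hb⟩ := exists_mul_pow_eq_mul (hS s hs ▸ LieSubalgebra.mem_top a)
    exact ⟨b, s ^ n, pow_mem (subset_closure hs) n, hb⟩
  | one => exact ⟨a, 1, one_mem _, by simp⟩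
  | mul p r _ _ hp hr =>
    obtain ⟨b, m₁, hm₁, hb⟩ := hp a
    obtain ⟨c, m₂, hm₂, hc⟩ := hr b
    exact ⟨c, m₁ * m₂, mul_mem hm₁ hm₂, by rw [← mul_assoc, hb, mul_assoc, hc, mul_assoc]⟩

end OreClosure

/-- A skew derivation `(σ, δ)` of a `K`-algebra: `δ` is a `σ`-derivation, the datum from which the
Ore extension `R[t; σ, δ]` is built. -/
structure SkewDerivation (K R : Type*) [CommRing K] [Ring R] [Algebra K R] where
  σ : R →ₐ[K] R
  δ : R →ₗ[K] R
  leibniz : ∀ a b, δ (a * b) = σ a * δ b + δ a * b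

namespace SkewDerivation

variable {K R S : Type*} [CommRing K] [Ring R] [Algebra K R] [Ring S] [Algebra K S]

theorem δ_one (d : SkewDerivation K R) : d.δ 1 = 0 := by
  simpa using d.leibniz 1 1

theorem δ_algebraMap (d : SkewDerivation K R) (r : K) : d.δ (algebraMap K R r) = 0 := by
  rw [Algebra.algebraMap_eq_smul_one, map_smul, d.δ_one, smul_zero]

theorem δ_units_inv (d : SkewDerivation K R) (g : Rˣ) :
    d.δ ↑g⁻¹ = -(d.σ ↑g⁻¹ * d.δ g * ↑g⁻¹) := by
  have h := d.leibniz ↑g⁻¹ g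
  rw [g.inv_mul, d.δ_one] at h
  calc d.δ ↑g⁻¹ = d.δ ↑g⁻¹ * g * ↑g⁻¹ := by simp
    _ = _ := by rw [← neg_eq_of_add_eq_zero_right h.symm, neg_mul]

/-- An ordinary derivation of a commutative algebra, as a skew derivation with trivial twist. -/
def ofDerivation {A : Type*} [CommRing A] [Algebra K A] (δ : Derivation K A A) :
    SkewDerivation K A where
  σ := AlgHom.id K A
  δ := δ
  leibniz a b := by simp [mul_comm]

@[simp]
theorem ofDerivation_σ_apply {A : Type*} [CommRing A] [Algebra K A] (δ : Derivation K A A)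
    (a : A) : (ofDerivation δ).σ a = a := rfl

@[simp]
theorem ofDerivation_δ_apply {A : Type*} [CommRing A] [Algebra K A] (δ : Derivation K A A)
    (a : A) : (ofDerivation δ).δ a = δ a := rfl

/-- The defining relation `t a = σ(a) t + δ(a)` of the Ore extension, for an element `t` of an
algebra `S` to which `R` is mapped by `f`. -/
def SkewCommutes (d : SkewDerivation K R) (f : R →ₐ[K] S) (t : S) : Prop :=
  ∀ a, t * f a = f (d.σ a) * t + f (d.δ a)

theorem skewCommutes_of_adjoin_eq_top {d : SkewDerivation K R} {f : R →ₐ[K] S} {t : S} {T : Set R}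
    (hT : Algebra.adjoin K T = ⊤) (h : ∀ a ∈ T, t * f a = f (d.σ a) * t + f (d.δ a)) :
    d.SkewCommutes f t := by
  intro a
  have ha : a ∈ Algebra.adjoin K T := hT ▸ Algebra.mem_top
  induction ha using Algebra.adjoin_induction with
  | mem a ha => exact h a ha
  | algebraMap r =>
    rw [d.δ_algebraMap, map_zero, add_zero, AlgHom.commutes, AlgHom.commutes, AlgHom.commutes,
      Algebra.commutes]
  | add a b _ _ ha hb =>
    simp only [map_add, mul_add, add_mul, ha, hb]
    abel
  | mul a b _ _ ha hb =>
    rw [map_mul f, ← mul_assoc, ha, add_mul, mul_assoc, hb, d.leibniz]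
    simp only [map_add, map_mul]
    noncomm_ring

theorem skewCommutes_units_inv {d : SkewDerivation K R} {f : R →ₐ[K] S} {t : S} (g : Rˣ)
    (h : t * f g = f (d.σ g) * t + f (d.δ g)) :
    t * f ↑g⁻¹ = f (d.σ ↑g⁻¹) * t + f (d.δ ↑g⁻¹) := by
  have inv_mul : f (d.σ ↑g⁻¹) * f (d.σ g) = 1 := by simp [← map_mul]
  have mul_inv : f g * f ↑g⁻¹ = 1 := by simp [← map_mul]
  calc t * f ↑g⁻¹ = f (d.σ ↑g⁻¹) * (f (d.σ g) * t) * f ↑g⁻¹ := by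
        rw [← mul_assoc, inv_mul, one_mul]
    _ = f (d.σ ↑g⁻¹) * (t * f g - f (d.δ g)) * f ↑g⁻¹ := by rw [h, add_sub_cancel_right]
    _ = f (d.σ ↑g⁻¹) * t * (f g * f ↑g⁻¹) - f (d.σ ↑g⁻¹) * f (d.δ g) * f ↑g⁻¹ := by noncomm_ring
    _ = _ := by simp only [mul_inv, mul_one, d.δ_units_inv, map_neg, map_mul, sub_eq_add_neg]

/-- The triangular representation of `R` over `S` attached to a skew derivation: multiplicativity
of `a ↦ [σ a, δ a; 0, a]` encodes the multiplicativity of `σ` and the twisted Leibniz rule. -/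
def toMatrix (d : SkewDerivation K R) (f : R →ₐ[K] S) : R →ₐ[K] Matrix (Fin 2) (Fin 2) S :=
  AlgHom.ofLinearMap
    { toFun := fun a => !![f (d.σ a), f (d.δ a); 0, f a]
      map_add' := fun a b => by ext i j; fin_cases i <;> fin_cases j <;> simp
      map_smul' := fun r a => by ext i j; fin_cases i <;> fin_cases j <;> simp }
    (by simp [d.δ_one, Matrix.one_fin_two])
    (fun a b => by simp [d.leibniz])

theorem toMatrix_apply (d : SkewDerivation K R) (f : R →ₐ[K] S) (a : R) :
    d.toMatrix f a = !![f (d.σ a), f (d.δ a); 0, f a] := rfl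

theorem isTriangular_of_adjoin_eq_top {Θ : R →ₐ[K] Matrix (Fin 2) (Fin 2) R} {T : Set R}
    (hT : Algebra.adjoin K T = ⊤) (h : ∀ a ∈ T, Θ a 1 0 = 0 ∧ Θ a 1 1 = a) (a : R) :
    Θ a 1 0 = 0 ∧ Θ a 1 1 = a := by
  have ha : a ∈ Algebra.adjoin K T := hT ▸ Algebra.mem_top
  induction ha using Algebra.adjoin_induction with
  | mem a ha => exact h a ha
  | algebraMap r => simp [Matrix.algebraMap_matrix_apply]
  | add a b _ _ ha hb => simp [ha, hb]
  | mul a b _ _ ha hb => simp [Matrix.mul_apply, ha, hb]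

/-- The skew derivation `(σ, δ)` read off a triangular representation `a ↦ [σ a, δ a; 0, a]`. -/
def ofMatrix (Θ : R →ₐ[K] Matrix (Fin 2) (Fin 2) R) (h : ∀ a, Θ a 1 0 = 0 ∧ Θ a 1 1 = a) :
    SkewDerivation K R where
  σ := AlgHom.ofLinearMap (Matrix.entryLinearMap K R 0 0 ∘ₗ Θ.toLinearMap) (by simp)
    (fun a b => by simp [Matrix.mul_apply, h])
  δ := Matrix.entryLinearMap K R 0 1 ∘ₗ Θ.toLinearMap
  leibniz a b := by simp [Matrix.mul_apply, h]

end SkewDerivation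

/-- The Ore extension `R[t; σ, δ]`. The finitely supported family `a` stands for `∑ a n * t ^ n`,
with coefficients on the left of the powers of `t`. -/
def OreExtension {K R : Type*} [CommRing K] [Ring R] [Algebra K R] (_ : SkewDerivation K R) :
    Type _ :=
  ℕ →₀ R

namespace OreExtension

variable {K R S : Type*} [CommRing K] [Ring R] [Algebra K R] [Ring S] [Algebra K S]
  {d : SkewDerivation K R}

noncomputable instance : AddCommGroup (OreExtension d) := inferInstanceAs (AddCommGroup (ℕ →₀ R))

noncomputable instance : Module R (OreExtension d) := inferInstanceAs (Module R (ℕ →₀ R))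

noncomputable instance : Module K (OreExtension d) := inferInstanceAs (Module K (ℕ →₀ R))

instance : IsScalarTower K R (OreExtension d) := inferInstanceAs (IsScalarTower K R (ℕ →₀ R))

/-- The monomial `a * t ^ n`. -/
noncomputable def monomial (d : SkewDerivation K R) (n : ℕ) : R →ₗ[R] OreExtension d :=
  Finsupp.lsingle n

theorem smul_monomial (a b : R) (n : ℕ) : a • monomial d n b = monomial d n (a * b) := by
  rw [← smul_eq_mul, map_smul]

@[elab_as_elim]
theorem induction_monomial {P : OreExtension d → Prop} (m : OreExtension d) (zero : P 0)
    (add : ∀ m n, P m → P n → P (m + n)) (monomial : ∀ n a, P (monomial d n a)) : P m :=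
  Finsupp.induction_linear (motive := P) m zero add monomial

/-- Evaluation of skew polynomials at `t`; it is multiplicative when `t` skew commutes with the
image of `f`. -/
noncomputable def eval (d : SkewDerivation K R) (f : R →ₐ[K] S) (t : S) : OreExtension d →ₗ[K] S :=
  Finsupp.lsum K fun n => LinearMap.mulRight K (t ^ n) ∘ₗ f.toLinearMap

theorem eval_monomial (f : R →ₐ[K] S) (t : S) (n : ℕ) (a : R) :
    eval d f t (monomial d n a) = f a * t ^ n :=
  Finsupp.lsum_single _ _ _ _

theorem eval_smul (f : R →ₐ[K] S) (t : S) (a : R) (m : OreExtension d) :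
    eval d f t (a • m) = f a * eval d f t m := by
  induction m using induction_monomial with
  | zero => simp
  | add m n hm hn => rw [smul_add, map_add, hm, hn, map_add, mul_add]
  | monomial n b => rw [smul_monomial, eval_monomial, eval_monomial, map_mul, mul_assoc]

/-- Left multiplication by the variable. -/
noncomputable def varMul (d : SkewDerivation K R) : Module.End K (OreExtension d) :=
  Finsupp.lsum K fun n => (monomial d (n + 1)).restrictScalars K ∘ₗ d.σ.toLinearMap +
    (monomial d n).restrictScalars K ∘ₗ d.δ

theorem varMul_monomial (n : ℕ) (a : R) :
    varMul d (monomial d n a) = monomial d (n + 1) (d.σ a) + monomial d n (d.δ a) :=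
  Finsupp.lsum_single _ _ _ _

theorem eval_varMul {f : R →ₐ[K] S} {t : S} (h : d.SkewCommutes f t) (m : OreExtension d) :
    eval d f t (varMul d m) = t * eval d f t m := by
  induction m using induction_monomial with
  | zero => simp
  | add m n hm hn => rw [map_add, map_add, hm, hn, map_add, mul_add]
  | monomial n a =>
    rw [varMul_monomial, map_add, eval_monomial, eval_monomial, eval_monomial, ← mul_assoc, h,
      add_mul, pow_succ', mul_assoc]

theorem skewCommutes_varMul : d.SkewCommutes (Algebra.lsmul K K (OreExtension d)) (varMul d) := by
  refine fun a => LinearMap.ext fun m => ?_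
  change varMul d (a • m) = d.σ a • varMul d m + d.δ a • m
  induction m using induction_monomial with
  | zero => simp
  | add m n hm hn =>
    simp only [smul_add, map_add, hm, hn]
    abel
  | monomial n b =>
    simp only [smul_monomial, varMul_monomial, map_mul, d.leibniz, map_add, smul_add]
    abel

/-- Left multiplication by a skew polynomial, obtained by evaluating it at `varMul`. -/
noncomputable def leftMul (d : SkewDerivation K R) :
    OreExtension d →ₗ[K] Module.End K (OreExtension d) :=
  eval d (Algebra.lsmul K K (OreExtension d)) (varMul d)

theorem leftMul_monomial (n : ℕ) (a : R) (m : OreExtension d) :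
    leftMul d (monomial d n a) m = a • (varMul d ^ n) m := by
  rw [leftMul, eval_monomial]
  rfl

theorem eval_leftMul {f : R →ₐ[K] S} {t : S} (h : d.SkewCommutes f t) (m n : OreExtension d) :
    eval d f t (leftMul d m n) = eval d f t m * eval d f t n := by
  have eval_pow (i : ℕ) : eval d f t ((varMul d ^ i) n) = t ^ i * eval d f t n := by
    induction i with
    | zero => simp
    | succ i ih => rw [pow_succ', Module.End.mul_apply, eval_varMul h, ih, pow_succ', mul_assoc]
  induction m using induction_monomial with
  | zero => simp
  | add m m' hm hm' => simp only [map_add, LinearMap.add_apply, add_mul, hm, hm']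
  | monomial i a => rw [leftMul_monomial, eval_smul, eval_pow, eval_monomial, mul_assoc]

theorem leftMul_one : leftMul d (monomial d 0 1) = 1 := by
  ext1 m
  rw [leftMul_monomial, one_smul, pow_zero]

theorem varMul_pow_one (n : ℕ) : (varMul d ^ n) (monomial d 0 1) = monomial d n 1 := by
  induction n with
  | zero => rfl
  | succ n ih =>
    rw [pow_succ', Module.End.mul_apply, ih, varMul_monomial, map_one, d.δ_one, map_zero, add_zero]

theorem leftMul_apply_one (m : OreExtension d) : leftMul d m (monomial d 0 1) = m := by
  induction m using induction_monomial with
  | zero => simp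
  | add m n hm hn => rw [map_add, LinearMap.add_apply, hm, hn]
  | monomial n a => rw [leftMul_monomial, varMul_pow_one, smul_monomial, mul_one]

noncomputable instance : Ring (OreExtension d) where
  __ := (inferInstance : AddCommGroup (OreExtension d))
  one := monomial d 0 1
  mul m n := leftMul d m n
  zero_mul m := LinearMap.map_zero₂ (leftMul d) m
  mul_zero m := map_zero (leftMul d m)
  one_mul m := LinearMap.congr_fun leftMul_one m
  mul_one := leftMul_apply_one
  left_distrib m := map_add (leftMul d m)
  right_distrib := LinearMap.map_add₂ (leftMul d)
  mul_assoc l m n := LinearMap.congr_fun (eval_leftMul skewCommutes_varMul l m) n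

theorem mul_def (m n : OreExtension d) : m * n = leftMul d m n := rfl

theorem one_def : (1 : OreExtension d) = monomial d 0 1 := rfl

noncomputable instance : Algebra K (OreExtension d) :=
  Algebra.ofModule (fun r m n => LinearMap.map_smul₂ (leftMul d) r m n)
    (fun r m n => map_smul (leftMul d m) r n)

/-- The inclusion of the coefficients. -/
noncomputable def C (d : SkewDerivation K R) : R →ₐ[K] OreExtension d :=
  AlgHom.ofLinearMap ((monomial d 0).restrictScalars K) rfl fun a b => by
    refine Eq.symm ((leftMul_monomial 0 a _).trans ?_)
    exact smul_monomial a b 0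

/-- The variable. -/
noncomputable def X (d : SkewDerivation K R) : OreExtension d := monomial d 1 1

theorem C_mul (a : R) (m : OreExtension d) : C d a * m = a • m := by
  rw [mul_def]
  exact leftMul_monomial 0 a m

theorem X_mul (m : OreExtension d) : X d * m = varMul d m := by
  rw [mul_def, X, leftMul_monomial, one_smul, pow_one]

theorem monomial_eq (n : ℕ) (a : R) : monomial d n a = C d a * X d ^ n := by
  have X_pow : X d ^ n = monomial d n 1 := by
    rw [← varMul_pow_one, ← one_def]
    induction n with
    | zero => rfl
    | succ n ih => rw [pow_succ', ih, X_mul, pow_succ', Module.End.mul_apply]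
  rw [X_pow, C_mul, smul_monomial, mul_one]

theorem skewCommutes_X : d.SkewCommutes (C d) (X d) := fun a => by
  have C_eq (b : R) : C d b = monomial d 0 b := rfl
  rw [X_mul, C_eq a, varMul_monomial, monomial_eq, pow_one, C_eq (d.δ a)]

theorem adjoin_eq_top : Algebra.adjoin K (Set.range (C d) ∪ {X d}) = ⊤ := by
  refine eq_top_iff.2 fun m _ => ?_
  induction m using induction_monomial with
  | zero => exact zero_mem _
  | add m n hm hn => exact add_mem (hm trivial) (hn trivial)
  | monomial n a =>
    rw [monomial_eq]
    exact mul_mem (Algebra.subset_adjoin (.inl ⟨a, rfl⟩))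
      (pow_mem (Algebra.subset_adjoin (.inr rfl)) n)

theorem isLeftRegular_C {s : R} (hs : IsLeftRegular s) : IsLeftRegular (C d s) := by
  refine isLeftRegular_iff_right_eq_zero_of_mul.2 fun m hm => Finsupp.ext fun n => ?_
  rw [C_mul] at hm
  exact isLeftRegular_iff_right_eq_zero_of_mul.1 hs _ (Finsupp.ext_iff.1 hm n)

/-- The universal property of the Ore extension. -/
noncomputable def lift (f : R →ₐ[K] S) (t : S) (h : d.SkewCommutes f t) : OreExtension d →ₐ[K] S :=
  AlgHom.ofLinearMap (eval d f t) (by rw [one_def, eval_monomial, map_one, pow_zero, one_mul])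
    (eval_leftMul h)

theorem lift_C {f : R →ₐ[K] S} {t : S} (h : d.SkewCommutes f t) (a : R) :
    lift f t h (C d a) = f a :=
  (eval_monomial (d := d) f t 0 a).trans (by rw [pow_zero, mul_one])

theorem lift_X {f : R →ₐ[K] S} {t : S} (h : d.SkewCommutes f t) : lift f t h (X d) = t :=
  (eval_monomial (d := d) f t 1 1).trans (by rw [map_one, pow_one, one_mul])

theorem mul_toMatrix_C {d' : SkewDerivation K R} {s e : OreExtension d} {a : R}
    (hσ : s * C d (d'.σ a) = C d (d'.σ (d.σ a)) * s + C d (d'.σ (d.δ a)))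
    (hδ : s * C d (d'.δ a) + e * C d a =
      C d (d'.σ (d.σ a)) * e + C d (d'.δ (d.σ a)) * X d + C d (d'.δ (d.δ a))) :
    !![s, e; 0, X d] * d'.toMatrix (C d) a =
      d'.toMatrix (C d) (d.σ a) * !![s, e; 0, X d] + d'.toMatrix (C d) (d.δ a) := by
  simp [SkewDerivation.toMatrix_apply, hσ, hδ, skewCommutes_X a]

/-- The skew derivation of `R[t; σ, δ]` that extends `d'` and maps the variable to `s` under its
endomorphism and to `e` under its twisted derivation. -/
noncomputable def extend (d' : SkewDerivation K R) (s e : OreExtension d)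
    (h : d.SkewCommutes (d'.toMatrix (C d)) !![s, e; 0, X d]) :
    SkewDerivation K (OreExtension d) :=
  .ofMatrix (lift (d'.toMatrix (C d)) _ h) <|
    SkewDerivation.isTriangular_of_adjoin_eq_top adjoin_eq_top <| by
      rintro _ (⟨a, rfl⟩ | rfl)
      · simp [lift_C, SkewDerivation.toMatrix_apply]
      · simp [lift_X]

section extend

variable {d' : SkewDerivation K R} {s e : OreExtension d}
  (h : d.SkewCommutes (d'.toMatrix (C d)) !![s, e; 0, X d])

theorem extend_σ_C (a : R) : (extend d' s e h).σ (C d a) = C d (d'.σ a) :=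
  congr_fun₂ (lift_C h a) 0 0

theorem extend_δ_C (a : R) : (extend d' s e h).δ (C d a) = C d (d'.δ a) :=
  congr_fun₂ (lift_C h a) 0 1

theorem extend_σ_X : (extend d' s e h).σ (X d) = s :=
  congr_fun₂ (lift_X h) 0 0

theorem extend_δ_X : (extend d' s e h).δ (X d) = e :=
  congr_fun₂ (lift_X h) 0 1

theorem skewCommutes_extend {F : OreExtension d →ₐ[K] S} {t : S}
    (hC : d'.SkewCommutes (F.comp (C d)) t) (hX : t * F (X d) = F s * t + F e) :
    (extend d' s e h).SkewCommutes F t := by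
  refine SkewDerivation.skewCommutes_of_adjoin_eq_top adjoin_eq_top ?_
  rintro _ (⟨a, rfl⟩ | rfl)
  · rw [extend_σ_C, extend_δ_C]
    exact hC a
  · rw [extend_σ_X, extend_δ_X, hX]

end extend

section shiftExtend

variable {A : Type*} [CommRing A] [Algebra K A] {δ δ' : Derivation K A A} {c : K}

open SkewDerivation

theorem skewCommutes_shift (h : ⁅δ', δ⁆ = c • δ') :
    (ofDerivation δ).SkewCommutes ((ofDerivation δ').toMatrix (C (ofDerivation δ)))
      !![X (ofDerivation δ) + algebraMap K _ c, 0; 0, X (ofDerivation δ)] := fun a => by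
  have lie_apply : δ' (δ a) = δ (δ' a) + c • δ' a := by
    rw [← Derivation.smul_apply, ← h, Derivation.commutator_apply, add_sub_cancel]
  refine mul_toMatrix_C ?_ ?_
  · simp only [ofDerivation_σ_apply, add_mul, mul_add, skewCommutes_X a, ofDerivation_δ_apply,
      Algebra.commutes]
    abel
  · simp only [ofDerivation_σ_apply, ofDerivation_δ_apply, add_mul, skewCommutes_X (δ' a),
      lie_apply, map_add, map_mul, AlgHom.commutes, Algebra.smul_def, zero_mul, mul_zero, add_zero,
      zero_add, add_assoc]

/-- If `⁅δ', δ⁆ = c • δ'`, then `δ'` extends to a skew derivation of `A[t; δ]` that kills the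
variable, twisted by the automorphism `t ↦ t + c`. -/
noncomputable def shiftExtend (h : ⁅δ', δ⁆ = c • δ') :
    SkewDerivation K (OreExtension (ofDerivation δ)) :=
  extend (ofDerivation δ') (X _ + algebraMap K _ c) 0 (skewCommutes_shift h)

variable (h : ⁅δ', δ⁆ = c • δ')

theorem shiftExtend_σ_C (a : A) : (shiftExtend h).σ (C _ a) = C _ a := extend_σ_C _ a

theorem shiftExtend_δ_C (a : A) : (shiftExtend h).δ (C _ a) = C _ (δ' a) := extend_δ_C _ a

theorem shiftExtend_σ_X : (shiftExtend h).σ (X _) = X _ + algebraMap K _ c := extend_σ_X _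

theorem shiftExtend_δ_X : (shiftExtend h).δ (X _) = 0 := extend_δ_X _

theorem skewCommutes_shiftExtend {F : OreExtension (ofDerivation δ) →ₐ[K] S} {t : S}
    (hC : (ofDerivation δ').SkewCommutes (F.comp (C _)) t)
    (hX : t * F (X _) = (F (X _) + algebraMap K S c) * t) : (shiftExtend h).SkewCommutes F t :=
  skewCommutes_extend _ hC <| by rw [hX, map_add, AlgHom.commutes, map_zero, add_zero]

end shiftExtend

end OreExtension

/-- Three derivations of a commutative algebra `A`, with structure elements `p` and `w`, that are
compatible with the relations `y ζ = (ζ - 1) y`, `v ζ = (ζ + 1) v` and `v y = y v + (y p - w ζ)`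
between variables `ζ`, `y`, `v` acting on `A` by them. -/
structure JordanTriple (K A : Type*) [CommRing K] [CommRing A] [Algebra K A] where
  δζ : Derivation K A A
  δy : Derivation K A A
  δv : Derivation K A A
  p : A
  w : A
  lie_y_ζ : ⁅δy, δζ⁆ = (-1 : K) • δy
  lie_v_ζ : ⁅δv, δζ⁆ = (1 : K) • δv
  lie_v_y : ⁅δv, δy⁆ = p • δy - w • δζ
  ζ_p : δζ p = -p
  ζ_w : δζ w = 0

namespace JordanTriple

open OreExtension SkewDerivation

variable {K A S : Type*} [CommRing K] [CommRing A] [Algebra K A] [Ring S] [Algebra K S]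
  (T : JordanTriple K A)

/-- The Ore extension `A[ζ; δζ]`. -/
abbrev ExtZ : Type _ := OreExtension (ofDerivation T.δζ)

/-- The skew derivation of `A[ζ]` by which `y` is adjoined. -/
noncomputable abbrev skewY : SkewDerivation K T.ExtZ := shiftExtend T.lie_y_ζ

/-- The skew derivation of `A[ζ]` that will be induced by `v`. -/
noncomputable abbrev skewVZ : SkewDerivation K T.ExtZ := shiftExtend T.lie_v_ζ

/-- The iterated Ore extension `A[ζ][y]`. -/
abbrev ExtY : Type _ := OreExtension T.skewY

/-- The inclusion of `A` into `A[ζ][y]`. -/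
noncomputable abbrev baseY : A →ₐ[K] T.ExtY := (C T.skewY).comp (C _)

/-- The variable `ζ` of `A[ζ][y]`. -/
noncomputable abbrev zetaY : T.ExtY := C T.skewY (X _)

theorem zetaY_mul_baseY (a : A) :
    T.zetaY * T.baseY a = T.baseY a * T.zetaY + T.baseY (T.δζ a) := by
  rw [AlgHom.comp_apply, ← map_mul, skewCommutes_X a, map_add, map_mul]
  rfl

theorem X_mul_baseY (a : A) :
    X T.skewY * T.baseY a = T.baseY a * X T.skewY + T.baseY (T.δy a) := by
  rw [AlgHom.comp_apply, skewCommutes_X, shiftExtend_σ_C, shiftExtend_δ_C]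
  rfl

theorem X_mul_zetaY : X T.skewY * T.zetaY = (T.zetaY - 1) * X T.skewY := by
  rw [skewCommutes_X, shiftExtend_σ_X, shiftExtend_δ_X]
  simp [sub_eq_add_neg]

/-- The commutator of `v` and `y`. -/
noncomputable def vyCommutator : T.ExtY := X T.skewY * T.baseY T.p - T.baseY T.w * T.zetaY

theorem vyCommutator_mul_baseY (a : A) :
    T.vyCommutator * T.baseY a = T.baseY a * T.vyCommutator +
      T.baseY (T.δv (T.δy a) - T.δy (T.δv a)) := by
  have lie_apply : T.δv (T.δy a) - T.δy (T.δv a) = T.p * T.δy a - T.w * T.δζ a := by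
    rw [← Derivation.commutator_apply, T.lie_v_y]
    rfl
  have y_part : X T.skewY * T.baseY T.p * T.baseY a =
      T.baseY a * (X T.skewY * T.baseY T.p) + T.baseY (T.p * T.δy a) := by
    rw [mul_assoc, ← map_mul, X_mul_baseY, X_mul_baseY, T.δy.leibniz, mul_comm T.p a]
    simp only [map_add, map_mul, smul_eq_mul, mul_add]
    noncomm_ring
  have ζ_part : T.baseY T.w * T.zetaY * T.baseY a =
      T.baseY a * (T.baseY T.w * T.zetaY) + T.baseY (T.w * T.δζ a) := by
    rw [mul_assoc, zetaY_mul_baseY, mul_add, ← mul_assoc, ← mul_assoc, ← map_mul, ← map_mul,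
      ← map_mul, mul_comm T.w a]
  rw [lie_apply, vyCommutator, sub_mul, y_part, ζ_part, mul_sub, map_sub]
  abel

theorem vyCommutator_mul_zetaY : T.vyCommutator * T.zetaY = T.zetaY * T.vyCommutator := by
  have baseY_p : T.baseY T.p * T.zetaY = (T.zetaY + 1) * T.baseY T.p := by
    rw [add_mul, one_mul, zetaY_mul_baseY, T.ζ_p, map_neg, neg_add_cancel_right]
  have baseY_w : T.zetaY * T.baseY T.w = T.baseY T.w * T.zetaY := by
    rw [zetaY_mul_baseY, T.ζ_w, map_zero, add_zero]
  rw [vyCommutator, sub_mul, mul_sub, mul_assoc, baseY_p, ← mul_assoc, mul_add, X_mul_zetaY,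
    ← mul_assoc T.zetaY, ← mul_assoc T.zetaY, baseY_w]
  noncomm_ring

theorem skewCommutes_vyCommutator :
    T.skewY.SkewCommutes (T.skewVZ.toMatrix (C _)) !![X _, T.vyCommutator; 0, X _] := by
  refine skewCommutes_of_adjoin_eq_top adjoin_eq_top ?_
  rintro _ (⟨a, rfl⟩ | rfl)
  · refine mul_toMatrix_C ?_ ?_
    · simp only [shiftExtend_σ_C, shiftExtend_δ_C]
      exact T.X_mul_baseY a
    · simp only [shiftExtend_σ_C, shiftExtend_δ_C]
      change X T.skewY * T.baseY (T.δv a) + T.vyCommutator * T.baseY a =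
        T.baseY a * T.vyCommutator + T.baseY (T.δv a) * X T.skewY + T.baseY (T.δv (T.δy a))
      rw [X_mul_baseY, vyCommutator_mul_baseY, map_sub]
      abel
  · refine mul_toMatrix_C ?_ ?_
    · simp only [shiftExtend_σ_X, shiftExtend_δ_X, map_add, map_zero, map_neg, map_one, mul_add,
        X_mul_zetaY]
      noncomm_ring
    · simp only [shiftExtend_σ_X, shiftExtend_δ_X, map_add, map_zero, map_neg, map_one, δ_one,
        vyCommutator_mul_zetaY]
      noncomm_ring

/-- The skew derivation of `A[ζ][y]` by which `v` is adjoined. -/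
noncomputable def skewV : SkewDerivation K T.ExtY :=
  extend T.skewVZ (X _) T.vyCommutator T.skewCommutes_vyCommutator

/-- The iterated Ore extension `A[ζ][y][v]`. -/
abbrev ExtV : Type _ := OreExtension T.skewV

/-- The inclusion of `A` into `A[ζ][y][v]`. -/
noncomputable def base : A →ₐ[K] T.ExtV := (C T.skewV).comp T.baseY

/-- The variable `ζ` of `A[ζ][y][v]`. -/
noncomputable def zeta : T.ExtV := C T.skewV T.zetaY

/-- The variable `y` of `A[ζ][y][v]`. -/
noncomputable def y : T.ExtV := C T.skewV (X T.skewY)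

/-- The variable `v` of `A[ζ][y][v]`. -/
noncomputable def v : T.ExtV := X T.skewV

theorem isLeftRegular_base {a : A} (ha : IsLeftRegular a) : IsLeftRegular (T.base a) :=
  isLeftRegular_C (isLeftRegular_C (isLeftRegular_C ha))

theorem skewV_σ_C (r : T.ExtZ) : T.skewV.σ (C _ r) = C _ (T.skewVZ.σ r) := extend_σ_C _ r

theorem skewV_δ_C (r : T.ExtZ) : T.skewV.δ (C _ r) = C _ (T.skewVZ.δ r) := extend_δ_C _ r

theorem skewV_σ_X : T.skewV.σ (X _) = X _ := extend_σ_X _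

theorem skewV_δ_X : T.skewV.δ (X _) = T.vyCommutator := extend_δ_X _

/-- The elements `ζ`, `y`, `v` of `S` act on the image of `A` by the derivations of `T` and satisfy
the three relations between the variables. -/
structure Realizes (T : JordanTriple K A) (f : A →ₐ[K] S) (ζ y v : S) : Prop where
  zeta_mul : (ofDerivation T.δζ).SkewCommutes f ζ
  y_mul : (ofDerivation T.δy).SkewCommutes f y
  v_mul : (ofDerivation T.δv).SkewCommutes f v
  y_mul_zeta : y * ζ = (ζ - 1) * y
  v_mul_zeta : v * ζ = (ζ + 1) * v
  v_mul_y : v * y = y * v + (y * f T.p - f T.w * ζ)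

theorem realizes_base : T.Realizes T.base T.zeta T.y T.v where
  zeta_mul a := by
    rw [zeta, base, AlgHom.comp_apply, ← map_mul, zetaY_mul_baseY, map_add, map_mul]
    rfl
  y_mul a := by
    rw [y, base, AlgHom.comp_apply, ← map_mul, X_mul_baseY, map_add, map_mul]
    rfl
  v_mul a := by
    simp only [v, base, AlgHom.comp_apply, ofDerivation_σ_apply, ofDerivation_δ_apply]
    rw [skewCommutes_X, skewV_σ_C, skewV_δ_C, shiftExtend_σ_C, shiftExtend_δ_C]
  y_mul_zeta := by rw [y, zeta, ← map_mul, X_mul_zetaY, map_mul, map_sub, map_one]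
  v_mul_zeta := by
    rw [v, zeta, skewCommutes_X, skewV_σ_C, skewV_δ_C, shiftExtend_σ_X, shiftExtend_δ_X]
    simp only [map_add, map_one, map_zero, add_zero]
  v_mul_y := by
    rw [v, y, skewCommutes_X, skewV_σ_X, skewV_δ_X, vyCommutator, map_sub, map_mul, map_mul]
    rfl

namespace Realizes

variable {T} {f : A →ₐ[K] S} {ζ y v : S} (h : T.Realizes f ζ y v)

/-- The map out of `A[ζ]` given by a realization. -/
noncomputable def liftZ : T.ExtZ →ₐ[K] S := OreExtension.lift f ζ h.zeta_mul

theorem liftZ_comp_C : h.liftZ.comp (C _) = f := AlgHom.ext (lift_C h.zeta_mul)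

theorem liftZ_X : h.liftZ (X _) = ζ := lift_X h.zeta_mul

theorem skewCommutes_skewY : T.skewY.SkewCommutes h.liftZ y :=
  skewCommutes_shiftExtend _ (by simpa only [liftZ_comp_C] using h.y_mul) <| by
    rw [liftZ_X, h.y_mul_zeta, map_neg, map_one, sub_eq_add_neg]

theorem skewCommutes_skewVZ : T.skewVZ.SkewCommutes h.liftZ v :=
  skewCommutes_shiftExtend _ (by simpa only [liftZ_comp_C] using h.v_mul) <| by
    rw [liftZ_X, h.v_mul_zeta, map_one]

/-- The map out of `A[ζ][y]` given by a realization. -/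
noncomputable def liftY : T.ExtY →ₐ[K] S := OreExtension.lift h.liftZ y h.skewCommutes_skewY

theorem liftY_comp_C : h.liftY.comp (C _) = h.liftZ := AlgHom.ext (lift_C h.skewCommutes_skewY)

theorem liftY_zetaY : h.liftY T.zetaY = ζ := (lift_C _ _).trans h.liftZ_X

theorem liftY_baseY (a : A) : h.liftY (T.baseY a) = f a := (lift_C _ _).trans (lift_C _ _)

theorem liftY_X : h.liftY (X _) = y := lift_X h.skewCommutes_skewY

theorem skewCommutes_skewV : T.skewV.SkewCommutes h.liftY v :=
  skewCommutes_extend _ (h.liftY_comp_C ▸ h.skewCommutes_skewVZ) <| by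
    rw [liftY_X, h.v_mul_y, vyCommutator, map_sub, map_mul, map_mul, liftY_X, liftY_baseY,
      liftY_baseY, liftY_zetaY]

/-- The map out of `A[ζ][y][v]` given by a realization. -/
noncomputable def lift : T.ExtV →ₐ[K] S := OreExtension.lift h.liftY v h.skewCommutes_skewV

theorem lift_base (a : A) : h.lift (T.base a) = f a := (lift_C _ _).trans (h.liftY_baseY a)

theorem lift_zeta : h.lift T.zeta = ζ := (lift_C _ _).trans h.liftY_zetaY

theorem lift_y : h.lift T.y = y := (lift_C _ _).trans h.liftY_X

theorem lift_v : h.lift T.v = v := lift_X h.skewCommutes_skewV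

end Realizes

end JordanTriple

/-- The coordinate ring `K[u, x, g, g⁻¹]`, as the algebra of the monoid of monomials. -/
abbrev CoordinateRing (K : Type*) [CommRing K] : Type _ :=
  MonoidAlgebra K (Multiplicative ℕ × Multiplicative ℕ × Multiplicative ℤ)

namespace CoordinateRing

variable (K : Type*) [CommRing K]

/-- The coordinate `u`. -/
noncomputable def u : CoordinateRing K := MonoidAlgebra.of K _ (.ofAdd 1, 1, 1)

/-- The coordinate `x`. -/
noncomputable def x : CoordinateRing K := MonoidAlgebra.of K _ (1, .ofAdd 1, 1)

/-- The invertible coordinate `g`. -/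
noncomputable def g : (CoordinateRing K)ˣ :=
  Units.map ((MonoidAlgebra.of K _).comp ((MonoidHom.inr _ _).comp (MonoidHom.inr _ _)))
    (toUnits (.ofAdd 1))

theorem of_eq (m : Multiplicative ℕ × Multiplicative ℕ × Multiplicative ℤ) :
    MonoidAlgebra.of K _ m = u K ^ m.1.toAdd * x K ^ m.2.1.toAdd * ↑(g K ^ m.2.2.toAdd) := by
  rw [u, x, g, ← map_pow, ← map_pow, ← map_zpow, ← map_zpow, Units.coe_map, MonoidHom.comp_apply,
    ← map_mul, ← map_mul]
  congr 1
  refine Prod.ext ?_ (Prod.ext ?_ ?_) <;> simp [← ofAdd_nsmul, ← ofAdd_zsmul]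

theorem adjoin_eq_top :
    Algebra.adjoin K {u K, x K, ↑(g K), ↑(g K)⁻¹} = (⊤ : Subalgebra K (CoordinateRing K)) := by
  set B := Algebra.adjoin K {u K, x K, ↑(g K), ↑(g K)⁻¹}
  have g_zpow_mem : ∀ n : ℤ, (↑(g K ^ n) : CoordinateRing K) ∈ B
    | (n : ℕ) => by
      rw [zpow_natCast, Units.val_pow_eq_pow_val]
      exact pow_mem (Algebra.subset_adjoin (by simp)) n
    | .negSucc n => by
      rw [zpow_negSucc, ← inv_pow, Units.val_pow_eq_pow_val]
      exact pow_mem (Algebra.subset_adjoin (by simp)) _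
  refine eq_top_iff.2 fun a _ => ?_
  induction a using MonoidAlgebra.induction_on with
  | of m =>
    rw [of_eq]
    exact mul_mem (mul_mem (pow_mem (Algebra.subset_adjoin (by simp)) _)
      (pow_mem (Algebra.subset_adjoin (by simp)) _)) (g_zpow_mem _)
  | add a b ha hb => exact add_mem (ha trivial) (hb trivial)
  | smul r a ha => exact Subalgebra.smul_mem _ (ha trivial) r

variable {K} {S : Type*} [Ring S] [Algebra K S] {u' x' : S} {g' : Sˣ}

/-- The universal property of `K[u, x, g, g⁻¹]`. -/
noncomputable def lift (hux : Commute u' x') (hug : Commute u' g') (hxg : Commute x' g') :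
    CoordinateRing K →ₐ[K] S :=
  MonoidAlgebra.lift K S _ <|
    (powersHom S u').noncommCoprod
      ((powersHom S x').noncommCoprod ((Units.coeHom S).comp (zpowersHom Sˣ g'))
        fun m n => (hxg.units_zpow_right n.toAdd).pow_left m.toAdd)
      fun m n => ((hux.pow_right n.1.toAdd).mul_right
        (hug.units_zpow_right n.2.toAdd)).pow_left m.toAdd

section lift

variable (hux : Commute u' x') (hug : Commute u' g') (hxg : Commute x' g')

theorem lift_of (m : Multiplicative ℕ × Multiplicative ℕ × Multiplicative ℤ) :
    lift hux hug hxg (MonoidAlgebra.of K _ m) =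
      u' ^ m.1.toAdd * (x' ^ m.2.1.toAdd * ↑(g' ^ m.2.2.toAdd)) := by
  rw [lift, MonoidAlgebra.lift_of]
  rfl

theorem lift_u : lift hux hug hxg (u K) = u' := by
  simp [u, -MonoidAlgebra.of_apply, lift_of]

theorem lift_x : lift hux hug hxg (x K) = x' := by
  simp [x, -MonoidAlgebra.of_apply, lift_of]

theorem lift_g : lift hux hug hxg (g K).val = g' := by
  simp [g, -MonoidAlgebra.of_apply, lift_of]

theorem lift_g_inv : lift hux hug hxg (g K)⁻¹.val = ↑g'⁻¹ := by
  refine eq_comm.1 (Units.inv_eq_of_mul_eq_one_right ?_)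
  rw [← lift_g (K := K) hux hug hxg, ← map_mul, Units.mul_inv, map_one]

end lift

theorem algHom_ext {f f' : CoordinateRing K →ₐ[K] S} (hu : f (u K) = f' (u K))
    (hx : f (x K) = f' (x K)) (hg : f (g K).val = f' (g K).val) : f = f' := by
  have hg_inv : f (g K)⁻¹.val = f' (g K)⁻¹.val :=
    Units.val_inj.2 (congr_arg (·⁻¹)
      (Units.ext hg : Units.map (f : _ →* S) (g K) = Units.map (f' : _ →* S) (g K)))
  refine AlgHom.ext_of_adjoin_eq_top (adjoin_eq_top K) ?_
  rintro _ (rfl | rfl | rfl | rfl) <;> assumption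

theorem derivation_ext {δ δ' : Derivation K (CoordinateRing K) (CoordinateRing K)}
    (hu : δ (u K) = δ' (u K)) (hx : δ (x K) = δ' (x K)) (hg : δ ↑(g K) = δ' ↑(g K)) : δ = δ' := by
  refine Derivation.ext_of_adjoin_eq_top _ (adjoin_eq_top K) ?_
  have hg_inv : δ ↑(g K)⁻¹ = δ' ↑(g K)⁻¹ := by
    rw [Derivation.leibniz_of_mul_eq_one δ (g K).inv_mul,
      Derivation.leibniz_of_mul_eq_one δ' (g K).inv_mul, hg]
  rintro _ (rfl | rfl | rfl | rfl) <;> assumption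

open SkewDerivation in
theorem skewCommutes_ofDerivation {δ : Derivation K (CoordinateRing K) (CoordinateRing K)}
    {f : CoordinateRing K →ₐ[K] S} {t : S}
    (hu : t * f (u K) = f (u K) * t + f (δ (u K)))
    (hx : t * f (x K) = f (x K) * t + f (δ (x K)))
    (hg : t * f (g K).val = f (g K).val * t + f (δ (g K).val)) :
    (ofDerivation δ).SkewCommutes f t := by
  have hg_inv := skewCommutes_units_inv (d := ofDerivation δ) (g K) hg
  refine skewCommutes_of_adjoin_eq_top (adjoin_eq_top K) ?_
  rintro _ (rfl | rfl | rfl | rfl) <;> assumption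

section derivation

open TrivSqZeroExt

variable (du dx dg : CoordinateRing K)

theorem isUnit_inl_g_add_inr :
    IsUnit (inl (g K).val + inr dg : TrivSqZeroExt (CoordinateRing K) (CoordinateRing K)) :=
  isUnit_iff_isUnit_fst.2 (by simp)

/-- The homomorphism `a ↦ a + δ(a) ε` to the dual numbers, for the derivation `δ` with prescribed
values on the coordinates. -/
noncomputable def dualHom :
    CoordinateRing K →ₐ[K] TrivSqZeroExt (CoordinateRing K) (CoordinateRing K) :=
  lift (u' := inl (u K) + inr du) (x' := inl (x K) + inr dx)
    (g' := (isUnit_inl_g_add_inr dg).unit) (.all _ _) (.all _ _) (.all _ _)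

theorem dualHom_u : dualHom du dx dg (u K) = inl (u K) + inr du := lift_u _ _ _

theorem dualHom_x : dualHom du dx dg (x K) = inl (x K) + inr dx := lift_x _ _ _

theorem dualHom_g : dualHom du dx dg (g K).val = inl (g K).val + inr dg := lift_g _ _ _

theorem fst_dualHom (a : CoordinateRing K) : (dualHom du dx dg a).fst = a := by
  have fstHom_comp : (fstHom K (CoordinateRing K) (CoordinateRing K)).comp (dualHom du dx dg) =
      AlgHom.id K _ :=
    algHom_ext (by simp [dualHom_u]) (by simp [dualHom_x]) (by simp [dualHom_g])
  exact DFunLike.congr_fun fstHom_comp a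

/-- The derivation of `K[u, x, g, g⁻¹]` with prescribed values on the coordinates. -/
noncomputable def derivation : Derivation K (CoordinateRing K) (CoordinateRing K) :=
  Derivation.mk'
    ((sndHom (CoordinateRing K) (CoordinateRing K)).restrictScalars K ∘ₗ
      (dualHom du dx dg).toLinearMap)
    fun a b => by simp [fst_dualHom, mul_comm]

theorem derivation_apply (a : CoordinateRing K) :
    derivation du dx dg a = (dualHom du dx dg a).snd := rfl

theorem derivation_u : derivation du dx dg (u K) = du := by simp [derivation_apply, dualHom_u]

theorem derivation_x : derivation du dx dg (x K) = dx := by simp [derivation_apply, dualHom_x]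

theorem derivation_g : derivation du dx dg (g K).val = dg := by simp [derivation_apply, dualHom_g]

end derivation

section NonVanishing

variable (K) [Nontrivial K]

/-- Evaluation at `u = x = 1`, `g = -1`, where both `x` and `u x + 2 + 2 g` take the value `1`. -/
noncomputable def evalOneOneNegOne : CoordinateRing K →ₐ[K] K :=
  lift (u' := 1) (x' := 1) (g' := -1) (.all _ _) (.all _ _) (.all _ _)

theorem x_ne_zero : x K ≠ 0 :=
  ne_zero_of_map (f := evalOneOneNegOne K) (by simp [evalOneOneNegOne, lift_x])

theorem u_mul_x_add_two_add_two_mul_g_ne_zero : u K * x K + 2 + 2 * (g K).val ≠ 0 :=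
  ne_zero_of_map (f := evalOneOneNegOne K) (by simp [evalOneOneNegOne, lift_u, lift_x, lift_g])

end NonVanishing

end CoordinateRing

theorem half_smul_add_half_smul {K M : Type*} [Field K] [NeZero (2 : K)] [AddCommGroup M]
    [Module K M] (m : M) : (1 / 2 : K) • m + (1 / 2 : K) • m = m := by
  rw [← two_smul K, smul_smul, mul_one_div_cancel two_ne_zero, one_smul]

namespace JordanDouble

open CoordinateRing LieSubalgebra SkewDerivation

section Derivations

variable (K : Type) [Field K]

/-- The derivation of `K[u, x, g, g⁻¹]` induced by the commutator with `ζ` in `D`. -/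
noncomputable def zetaDerivation : Derivation K (CoordinateRing K) (CoordinateRing K) :=
  derivation (-u K) (x K) 0

/-- The derivation of `K[u, x, g, g⁻¹]` induced by the commutator with `y` in `D`. -/
noncomputable def yDerivation : Derivation K (CoordinateRing K) (CoordinateRing K) :=
  derivation ((g K).val - 1) (-((1 / 2 : K) • (x K * x K))) (-(x K * (g K).val))

/-- The derivation of `K[u, x, g, g⁻¹]` induced by the commutator with `v` in `D`. -/
noncomputable def vDerivation : Derivation K (CoordinateRing K) (CoordinateRing K) :=
  derivation (-((1 / 2 : K) • (u K * u K))) (1 - (g K).val + x K * u K) ((g K).val * u K)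

@[simp]
theorem zetaDerivation_u : zetaDerivation K (u K) = -u K := derivation_u _ _ _

@[simp]
theorem zetaDerivation_x : zetaDerivation K (x K) = x K := derivation_x _ _ _

@[simp]
theorem zetaDerivation_g : zetaDerivation K (g K).val = 0 := derivation_g _ _ _

@[simp]
theorem yDerivation_u : yDerivation K (u K) = (g K).val - 1 := derivation_u _ _ _

@[simp]
theorem yDerivation_x : yDerivation K (x K) = -((1 / 2 : K) • (x K * x K)) := derivation_x _ _ _

@[simp]
theorem yDerivation_g : yDerivation K (g K).val = -(x K * (g K).val) := derivation_g _ _ _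

@[simp]
theorem vDerivation_u : vDerivation K (u K) = -((1 / 2 : K) • (u K * u K)) := derivation_u _ _ _

@[simp]
theorem vDerivation_x : vDerivation K (x K) = 1 - (g K).val + x K * u K := derivation_x _ _ _

@[simp]
theorem vDerivation_g : vDerivation K (g K).val = (g K).val * u K := derivation_g _ _ _

theorem lie_yDerivation_zetaDerivation :
    ⁅yDerivation K, zetaDerivation K⁆ = (-1 : K) • yDerivation K := by
  apply derivation_ext <;>
    simp [Derivation.commutator_apply, mul_comm]

theorem lie_vDerivation_zetaDerivation :
    ⁅vDerivation K, zetaDerivation K⁆ = (1 : K) • vDerivation K := by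
  apply derivation_ext <;>
    simp [Derivation.commutator_apply, mul_comm]

theorem lie_vDerivation_yDerivation [NeZero (2 : K)] :
    ⁅vDerivation K, yDerivation K⁆ = u K • yDerivation K - (g K).val • zetaDerivation K := by
  apply derivation_ext <;>
    simp only [Derivation.commutator_apply, Derivation.sub_apply, Derivation.smul_apply,
      Derivation.map_smul, Derivation.leibniz, Derivation.map_one_eq_zero, map_neg, map_add,
      map_sub, smul_eq_mul, smul_add, mul_neg, mul_smul_comm, zetaDerivation_u,
      zetaDerivation_x, zetaDerivation_g, yDerivation_u, yDerivation_x, yDerivation_g,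
      vDerivation_u, vDerivation_x, vDerivation_g]
  · linear_combination half_smul_add_half_smul (K := K) (u K * ((g K).val - 1))
  · linear_combination half_smul_add_half_smul (K := K) (u K * (x K * x K)) -
      half_smul_add_half_smul (K := K) (x K * (1 - (g K).val + x K * u K))
  · ring

/-- The data presenting `D` as an iterated Ore extension of `K[u, x, g, g⁻¹]`. -/
@[simps δζ δy δv p w]
noncomputable def jordanTriple [NeZero (2 : K)] : JordanTriple K (CoordinateRing K) where
  δζ := zetaDerivation K
  δy := yDerivation K
  δv := vDerivation K
  p := u K
  w := (g K).val
  lie_y_ζ := lie_yDerivation_zetaDerivation K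
  lie_v_ζ := lie_vDerivation_zetaDerivation K
  lie_v_y := lie_vDerivation_yDerivation K
  ζ_p := zetaDerivation_u K
  ζ_w := zetaDerivation_g K

end Derivations

section Relations

variable {K : Type} [Field K]

theorem Dmk_eq_of_rel {a b : FreeAlgebra K JGen} (h : JRel K a b) : Dmk K a = Dmk K b :=
  RingQuot.mkAlgHom_rel K h

theorem DG_mul_DGinv : DG K * DGinv K = 1 := by
  simpa only [map_mul, map_one] using! Dmk_eq_of_rel .gginv

theorem DGinv_mul_DG : DGinv K * DG K = 1 := by
  simpa only [map_mul, map_one] using! Dmk_eq_of_rel .ginvg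

theorem DU_mul_DX : DU K * DX K = DX K * DU K := by
  simpa only [map_mul] using! Dmk_eq_of_rel .ux

theorem DU_mul_DG : DU K * DG K = DG K * DU K := by
  simpa only [map_mul] using! Dmk_eq_of_rel .ug

theorem DG_mul_DX : DG K * DX K = DX K * DG K := by
  simpa only [map_mul] using! Dmk_eq_of_rel .gx

theorem DU_mul_DZ : DU K * DZ K = DZ K * DU K + DU K := by
  simpa only [map_mul, map_add] using! Dmk_eq_of_rel .uz

theorem DZ_mul_DX : DZ K * DX K = DX K * DZ K + DX K := by
  simpa only [map_mul, map_add] using! Dmk_eq_of_rel .zx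

theorem DZ_mul_DG : DZ K * DG K = DG K * DZ K := by
  simpa only [map_mul] using! Dmk_eq_of_rel .zg

theorem DU_mul_DY : DU K * DY K = DY K * DU K + (1 - DG K) := by
  simpa only [map_mul, map_add, map_sub, map_one] using! Dmk_eq_of_rel .uy

theorem DY_mul_DX : DY K * DX K = DX K * DY K - (1 / 2 : K) • (DX K * DX K) := by
  simpa only [map_mul, map_sub, map_smul] using! Dmk_eq_of_rel .yx

theorem DG_mul_DY : DG K * DY K = DY K * DG K + DX K * DG K := by
  simpa only [map_mul, map_add] using! Dmk_eq_of_rel .gy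

theorem DV_mul_DU : DV K * DU K = DU K * DV K - (1 / 2 : K) • (DU K * DU K) := by
  simpa only [map_mul, map_sub, map_smul] using! Dmk_eq_of_rel .vu

theorem DV_mul_DX : DV K * DX K = DX K * DV K + (1 - DG K) + DX K * DU K := by
  simpa only [map_mul, map_add, map_sub, map_one] using! Dmk_eq_of_rel .vx

theorem DV_mul_DG : DV K * DG K = DG K * DV K + DG K * DU K := by
  simpa only [map_mul, map_add] using! Dmk_eq_of_rel .vg

theorem DZ_mul_DY : DZ K * DY K = DY K * DZ K + DY K := by
  simpa only [map_mul, map_add] using! Dmk_eq_of_rel .zy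

theorem DV_mul_DZ : DV K * DZ K = DZ K * DV K + DV K := by
  simpa only [map_mul, map_add] using! Dmk_eq_of_rel .vz

theorem DV_mul_DY : DV K * DY K = DY K * DV K - DG K * DZ K + DY K * DU K := by
  simpa only [map_mul, map_add, map_sub] using! Dmk_eq_of_rel .vy

end Relations

section Coordinates

variable (K : Type) [Field K]

/-- The element `g` of `D`, as a unit. -/
noncomputable def unitDG : (D K)ˣ := ⟨DG K, DGinv K, DG_mul_DGinv, DGinv_mul_DG⟩

/-- The homomorphism `K[u, x, g, g⁻¹] → D`. -/
noncomputable def coordinateMap : CoordinateRing K →ₐ[K] D K :=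
  CoordinateRing.lift (g' := unitDG K) DU_mul_DX DU_mul_DG DG_mul_DX.symm

theorem coordinateMap_u : coordinateMap K (u K) = DU K := lift_u _ _ _

theorem coordinateMap_x : coordinateMap K (x K) = DX K := lift_x _ _ _

theorem coordinateMap_g : coordinateMap K (g K).val = DG K := lift_g _ _ _

theorem coordinateMap_g_inv : coordinateMap K (g K)⁻¹.val = DGinv K := lift_g_inv _ _ _

theorem adjoin_generators_eq_top :
    Algebra.adjoin K (Set.range (coordinateMap K) ∪ {DZ K, DY K, DV K}) = ⊤ := by
  set B := Algebra.adjoin K (Set.range (coordinateMap K) ∪ {DZ K, DY K, DV K})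
  have gen_mem : ∀ i, Dmk K (ι K i) ∈ B
    | .u => Algebra.subset_adjoin (.inl ⟨_, coordinateMap_u K⟩)
    | .x => Algebra.subset_adjoin (.inl ⟨_, coordinateMap_x K⟩)
    | .g => Algebra.subset_adjoin (.inl ⟨_, coordinateMap_g K⟩)
    | .ginv => Algebra.subset_adjoin (.inl ⟨_, coordinateMap_g_inv K⟩)
    | .zeta => Algebra.subset_adjoin (.inr (.inl rfl))
    | .y => Algebra.subset_adjoin (.inr (.inr (.inl rfl)))
    | .v => Algebra.subset_adjoin (.inr (.inr (.inr rfl)))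
  rw [eq_top_iff, ← (Dmk K).range_eq_top.2 (RingQuot.mkAlgHom_surjective K (JRel K)),
    ← Algebra.map_top, ← FreeAlgebra.adjoin_range_ι, AlgHom.map_adjoin, Algebra.adjoin_le_iff]
  rintro _ ⟨_, ⟨i, rfl⟩, rfl⟩
  exact gen_mem i

variable [NeZero (2 : K)]

theorem realizes_coordinateMap :
    (jordanTriple K).Realizes (coordinateMap K) (DZ K) (DY K) (DV K) where
  zeta_mul := by
    apply skewCommutes_ofDerivation <;> simp [coordinateMap_u, coordinateMap_x, coordinateMap_g,
      DU_mul_DZ, DZ_mul_DX, DZ_mul_DG]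
  y_mul := by
    apply skewCommutes_ofDerivation <;> simp [-one_div, coordinateMap_u, coordinateMap_x,
      coordinateMap_g, DU_mul_DY, DY_mul_DX, DG_mul_DY, sub_eq_add_neg, add_assoc]
  v_mul := by
    apply skewCommutes_ofDerivation <;> simp [-one_div, coordinateMap_u, coordinateMap_x,
      coordinateMap_g, DV_mul_DU, DV_mul_DX, DV_mul_DG, sub_eq_add_neg, add_assoc]
  y_mul_zeta := by rw [sub_mul, DZ_mul_DY, one_mul, add_sub_cancel_right]
  v_mul_zeta := by rw [DV_mul_DZ, add_mul, one_mul]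
  v_mul_y := by
    rw [jordanTriple_p, jordanTriple_w, coordinateMap_u, coordinateMap_g, DV_mul_DY]
    abel

variable {K}

theorem engel_coordinateMap_eq_top (a : CoordinateRing K) : engel K (coordinateMap K a) = ⊤ := by
  have commute_coord (b c) : Commute (coordinateMap K b) (coordinateMap K c) :=
    (Commute.all b c).map _
  have mem_of_skewCommutes {δ t} (h : (ofDerivation δ).SkewCommutes (coordinateMap K) t) :
      t ∈ engel K (coordinateMap K a) := by
    refine mem_engel_of_commute_lie ?_
    rw [Ring.lie_def, h a, ofDerivation_σ_apply, sub_add_cancel_left]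
    exact (commute_coord _ _).neg_right
  refine engel_eq_top_of_adjoin_eq_top (adjoin_generators_eq_top K) ?_
  rintro _ (⟨b, rfl⟩ | rfl | rfl | rfl)
  · exact mem_engel_of_commute_lie (by rw [(commute_coord a b).lie_eq]; exact .zero_right _)
  · exact mem_of_skewCommutes (realizes_coordinateMap K).zeta_mul
  · exact mem_of_skewCommutes (realizes_coordinateMap K).y_mul
  · exact mem_of_skewCommutes (realizes_coordinateMap K).v_mul

section lift

variable {S : Type*} [Ring S] [Algebra K S] {f : CoordinateRing K →ₐ[K] S} {ζ y v : S}

/-- The images in `S` of the generators of `D` prescribed by a realization. -/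
noncomputable def generatorImage (f : CoordinateRing K →ₐ[K] S) (ζ y v : S) : JGen → S
  | .u => f (u K)
  | .v => v
  | .zeta => ζ
  | .g => f (g K).val
  | .ginv => f (g K)⁻¹.val
  | .x => f (x K)
  | .y => y

theorem lift_generatorImage_eq_of_rel (h : (jordanTriple K).Realizes f ζ y v)
    {a b : FreeAlgebra K JGen} (hab : JRel K a b) :
    FreeAlgebra.lift K (generatorImage f ζ y v) a =
      FreeAlgebra.lift K (generatorImage f ζ y v) b := by
  cases hab <;> simp only [map_mul, map_add, map_sub, map_smul, map_one,
    FreeAlgebra.lift_ι_apply, generatorImage]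
  case gginv => rw [← map_mul, Units.mul_inv, map_one]
  case ginvg => rw [← map_mul, Units.inv_mul, map_one]
  case gx => rw [← map_mul, mul_comm, map_mul]
  case ug => rw [← map_mul, mul_comm, map_mul]
  case ux => rw [← map_mul, mul_comm, map_mul]
  case zg => simpa using h.zeta_mul (g K).val
  case zx => simpa using h.zeta_mul (x K)
  case uz => simp [h.zeta_mul (u K)]
  case uy => simp [h.y_mul (u K), add_assoc]
  case yx => simp [h.y_mul (x K), sub_eq_add_neg]
  case gy => simp [h.y_mul (g K).val]
  case vu => simp [h.v_mul (u K), sub_eq_add_neg]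
  case vx => simp [h.v_mul (x K), add_assoc]
  case vg => simp [h.v_mul (g K).val]
  case zy => rw [h.y_mul_zeta, sub_mul, one_mul, sub_add_cancel]
  case vz => rw [h.v_mul_zeta, add_mul, one_mul]
  case vy =>
    rw [h.v_mul_y, jordanTriple_p, jordanTriple_w]
    abel

/-- The universal property of `D`. -/
noncomputable def lift (h : (jordanTriple K).Realizes f ζ y v) : D K →ₐ[K] S :=
  RingQuot.liftAlgHom K ⟨FreeAlgebra.lift K (generatorImage f ζ y v),
    fun _ _ hab => lift_generatorImage_eq_of_rel h hab⟩

theorem lift_Dmk_ι (h : (jordanTriple K).Realizes f ζ y v) (i : JGen) :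
    lift h (Dmk K (ι K i)) = generatorImage f ζ y v i :=
  (RingQuot.liftAlgHom_mkAlgHom_apply ..).trans (FreeAlgebra.lift_ι_apply ..)

theorem lift_coordinateMap (h : (jordanTriple K).Realizes f ζ y v) (a : CoordinateRing K) :
    lift h (coordinateMap K a) = f a := by
  have comp_eq : (lift h).comp (coordinateMap K) = f := by
    apply algHom_ext <;> rw [AlgHom.comp_apply]
    · rw [coordinateMap_u]; exact lift_Dmk_ι h .u
    · rw [coordinateMap_x]; exact lift_Dmk_ι h .x
    · rw [coordinateMap_g]; exact lift_Dmk_ι h .g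
  exact DFunLike.congr_fun comp_eq a

end lift

variable (K) in
/-- The homomorphism from `D` to the iterated Ore extension `K[u, x, g, g⁻¹][ζ][y][v]`. -/
noncomputable def toExtV : D K →ₐ[K] (jordanTriple K).ExtV :=
  lift (jordanTriple K).realizes_base

theorem toExtV_injective : Function.Injective (toExtV K) := by
  set h := realizes_coordinateMap K
  have comp_eq : h.lift.comp (toExtV K) = AlgHom.id K (D K) := by
    refine AlgHom.ext_of_adjoin_eq_top (adjoin_generators_eq_top K) ?_
    rintro _ (⟨a, rfl⟩ | rfl | rfl | rfl)
    · exact (congr_arg h.lift (lift_coordinateMap _ a)).trans (h.lift_base a)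
    · exact (congr_arg h.lift (lift_Dmk_ι _ .zeta)).trans h.lift_zeta
    · exact (congr_arg h.lift (lift_Dmk_ι _ .y)).trans h.lift_y
    · exact (congr_arg h.lift (lift_Dmk_ι _ .v)).trans h.lift_v
  exact Function.LeftInverse.injective (g := h.lift) (DFunLike.congr_fun comp_eq)

theorem isLeftRegular_coordinateMap {a : CoordinateRing K} (ha : a ≠ 0) :
    IsLeftRegular (coordinateMap K a) := by
  have base_regular : IsLeftRegular (toExtV K (coordinateMap K a)) := by
    rw [toExtV, lift_coordinateMap]
    exact (jordanTriple K).isLeftRegular_base (IsLeftCancelMulZero.mul_left_cancel_of_ne_zero ha)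
  intro b c hbc
  exact toExtV_injective (base_regular (by simpa using congr_arg (toExtV K) hbc))

theorem isRegular_and_ore_of_closure_image {S : Set (CoordinateRing K)} (hS : 0 ∉ S) :
    letI X : Submonoid (D K) := Submonoid.closure (coordinateMap K '' S)
    (∀ m ∈ X, IsLeftRegular m ∧ IsRightRegular m) ∧
    (∀ a : D K, ∀ m ∈ X, ∃ b : D K, ∃ m₁ ∈ X, m₁ * a = b * m) ∧
    (∀ a : D K, ∀ m ∈ X, ∃ b : D K, ∃ m₂ ∈ X, a * m₂ = m * b) := by
  have engel_eq_top : ∀ s ∈ coordinateMap K '' S, engel K s = ⊤ := by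
    rintro _ ⟨a, -, rfl⟩
    exact engel_coordinateMap_eq_top a
  have regular : ∀ s ∈ coordinateMap K '' S, IsLeftRegular s := by
    rintro _ ⟨a, ha, rfl⟩
    exact isLeftRegular_coordinateMap (ne_of_mem_of_not_mem ha hS)
  exact ⟨fun m hm => isRegular_of_mem_closure engel_eq_top regular hm,
    fun a m hm => left_ore_of_mem_closure engel_eq_top a hm,
    fun a m hm => right_ore_of_mem_closure engel_eq_top a hm⟩

end Coordinates

end JordanDouble

open JordanDouble CoordinateRing in
theorem ore_conditions_general (K : Type) [Field K] [NeZero (2 : K)] :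
    letI q : D K := DU K * DX K + 2 + 2 * DG K
    letI X : Submonoid (D K) := Submonoid.closure {DX K, q}
    (∀ m ∈ X, IsLeftRegular m ∧ IsRightRegular m) ∧
    (∀ a : D K, ∀ m ∈ X, ∃ b : D K, ∃ m₁ ∈ X, m₁ * a = b * m) ∧
    (∀ a : D K, ∀ m ∈ X, ∃ b : D K, ∃ m₂ ∈ X, a * m₂ = m * b) := by
  have image_eq : coordinateMap K '' {x K, u K * x K + 2 + 2 * (g K).val} =
      {DX K, DU K * DX K + 2 + 2 * DG K} := by
    simp [Set.image_pair, map_ofNat (coordinateMap K), coordinateMap_u, coordinateMap_x,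
      coordinateMap_g]
  rw [← image_eq]
  refine isRegular_and_ore_of_closure_image ?_
  rintro (h | h)
  · exact x_ne_zero K h.symm
  · exact u_mul_x_add_two_add_two_mul_g_ne_zero K h.symm

/-- every element of the multiplicative submonoid `X` of `D` generated by `x`
and `q = ux + 2 + 2g` is a regular element (neither a left nor a right zero divisor), and `X`
satisfies the left and right Ore conditions in `D`; hence the localization `D'` of `D` at `X`
exists. -/
theorem ore_conditions :
    letI q : D k := DU k * DX k + 2 + 2 * DG k
    letI X : Submonoid (D k) := Submonoid.closure {DX k, q}
    (∀ m ∈ X, IsLeftRegular m ∧ IsRightRegular m) ∧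
    (∀ a : D k, ∀ m ∈ X, ∃ b : D k, ∃ m₁ ∈ X, m₁ * a = b * m) ∧
    (∀ a : D k, ∀ m ∈ X, ∃ b : D k, ∃ m₂ ∈ X, a * m₂ = m * b) :=
  ore_conditions_general k
end
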